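/- arXiv:1508.03182 — 2 statements merged into one kernel-verified Lean document; each statement's English description precedes it below -/
import Mathlib

section
/- Let (Ω, 𝒜, μ) be a measure space, p ∈ [1,∞), and T a positive C₀-semigroup on L_p(μ) with generator A. If V : Ω → [0,∞] is T-admissible, then the strong limit s-lim_{n→∞} T_{V − V∧n} always exists and equals (T_V)_{−V}, the C₀-semigroup obtained from T_V by applying −V as a perturbation. -/
open MeasureTheory Filter Topology ENNReal

noncomputable section

namespace Absorption

variable {E : Type*} [NormedAddCommGroup E] [NormedSpace ℝ E]

/-- A one-parameter semigroup of bounded operators (for nonnegative times). -/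
def IsSemigroup (T : ℝ → E →L[ℝ] E) : Prop :=
  T 0 = ContinuousLinearMap.id ℝ E ∧
    ∀ s t : ℝ, 0 ≤ s → 0 ≤ t → T (s + t) = (T s).comp (T t)

/-- A `C₀`-semigroup: a one-parameter semigroup which is strongly continuous on `[0, ∞)`. -/
def IsC0Semigroup (T : ℝ → E →L[ℝ] E) : Prop :=
  IsSemigroup T ∧ ∀ f : E, ContinuousOn (fun t => T t f) (Set.Ici (0 : ℝ))

/-- `(f, g)` belongs to the graph of the generator of the semigroup `T`. -/
def InGenerator (T : ℝ → E →L[ℝ] E) (f g : E) : Prop :=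
  Tendsto (fun t : ℝ => t⁻¹ • (T t f - f)) (𝓝[>] (0 : ℝ)) (𝓝 g)

variable {Ω : Type*} [MeasurableSpace Ω]

/-- A function into a measurable space is *locally measurable* (w.r.t. `μ`) if on every set of
finite measure it coincides a.e. with a measurable function. -/
def LocallyMeasurable {α : Type*} [MeasurableSpace α] (μ : Measure Ω) (V : Ω → α) : Prop :=
  ∀ B : Set Ω, MeasurableSet B → μ B < ∞ →
    ∃ g : Ω → α, Measurable g ∧ ∀ᵐ ω ∂(μ.restrict B), V ω = g ω

/-- A set is a local `μ`-null set if its intersection with every measurable set of finite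
measure is null. -/
def IsLocalNullSet (μ : Measure Ω) (N : Set Ω) : Prop :=
  ∀ B : Set Ω, MeasurableSet B → μ B < ∞ → μ (N ∩ B) = 0

/-- Positivity of a family of operators on `L_p` (for positive times). -/
def IsPositiveSG {p : ℝ≥0∞} {μ : Measure Ω} [Fact (1 ≤ p)]
    (T : ℝ → Lp ℝ p μ →L[ℝ] Lp ℝ p μ) : Prop :=
  ∀ t : ℝ, 0 ≤ t → ∀ f : Lp ℝ p μ, 0 ≤ f → 0 ≤ T t f

/-- A band projection on the Banach lattice `L_p(μ)`: an idempotent operator `P`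
with `0 ≤ P f ≤ f` for all `f ≥ 0`. -/
def IsBandProjection {p : ℝ≥0∞} {μ : Measure Ω} [Fact (1 ≤ p)]
    (P : Lp ℝ p μ →L[ℝ] Lp ℝ p μ) : Prop :=
  P.comp P = P ∧ ∀ f : Lp ℝ p μ, 0 ≤ f → 0 ≤ P f ∧ P f ≤ f

/-- `S = (e^{t(A−W)})_{t ≥ 0}`: `S` is the `C₀`-semigroup whose generator is `A - W`,
where `A` is the generator of `T` and the bounded function `W` acts by multiplication. -/
def IsPerturbedSG (μ : Measure Ω) (p : ℝ≥0∞) [Fact (1 ≤ p)]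
    (T S : ℝ → Lp ℝ p μ →L[ℝ] Lp ℝ p μ) (W : Ω → ℝ) : Prop :=
  IsC0Semigroup S ∧
    ∀ f g : Lp ℝ p μ, InGenerator S f g ↔
      ∃ g₀ : Lp ℝ p μ, InGenerator T f g₀ ∧
        ⇑g =ᵐ[μ] fun ω => g₀ ω - W ω * f ω

/-- Same as `IsPerturbedSG`, for semigroups acting on a subspace `F` of `L_p(μ)`. -/
def IsPerturbedSGSub (μ : Measure Ω) (p : ℝ≥0∞) [Fact (1 ≤ p)] (F : Submodule ℝ (Lp ℝ p μ))
    (T S : ℝ → F →L[ℝ] F) (W : Ω → ℝ) : Prop :=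
  IsC0Semigroup S ∧
    ∀ f g : F, InGenerator S f g ↔
      ∃ g₀ : F, InGenerator T f g₀ ∧
        ⇑(g : Lp ℝ p μ) =ᵐ[μ] fun ω => (g₀ : Lp ℝ p μ) ω - W ω * (f : Lp ℝ p μ) ω

/-- The truncation `V ∧ n` of `V : Ω → [0,∞]`, as a real-valued function. -/
def trunc (V : Ω → ℝ≥0∞) (n : ℕ) : Ω → ℝ := fun ω => (min (V ω) (n : ℝ≥0∞)).toReal

/-- The scalar multiple `ε V` of an absorption rate `V : Ω → [0,∞]`. -/
def smulRate (ε : ℝ) (V : Ω → ℝ≥0∞) : Ω → ℝ≥0∞ := fun ω => ENNReal.ofReal ε * V ω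

/-- The absorption rate `V - V ∧ n` (with value `∞` wherever `V = ∞`). -/
def resid (V : Ω → ℝ≥0∞) (n : ℕ) : Ω → ℝ≥0∞ := fun ω => V ω - min (V ω) (n : ℝ≥0∞)

/-- `TV` is the absorption semigroup `T_V` associated with the rate `V : Ω → [0,∞]`, i.e.
the strong limit `T_V(t) = s-lim_{n→∞} e^{t(A - V∧n)}` (for `t ≥ 0`). -/
def IsAbsorptionSG (μ : Measure Ω) (p : ℝ≥0∞) [Fact (1 ≤ p)]
    (T : ℝ → Lp ℝ p μ →L[ℝ] Lp ℝ p μ) (V : Ω → ℝ≥0∞)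
    (TV : ℝ → Lp ℝ p μ →L[ℝ] Lp ℝ p μ) : Prop :=
  ∃ S : ℕ → ℝ → Lp ℝ p μ →L[ℝ] Lp ℝ p μ,
    (∀ n, IsPerturbedSG μ p T (S n) (trunc V n)) ∧
    ∀ t : ℝ, 0 ≤ t → ∀ f, Tendsto (fun n => S n t f) atTop (𝓝 (TV t f))

/-- `V : Ω → [0,∞]` is `T`-admissible: `V` is locally measurable, the strong limits
`T_V(t) = s-lim_{n→∞} e^{t(A - V∧n)}` exist, and `T_V` is a `C₀`-semigroup. -/
def Admissible (μ : Measure Ω) (p : ℝ≥0∞) [Fact (1 ≤ p)]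
    (T : ℝ → Lp ℝ p μ →L[ℝ] Lp ℝ p μ) (V : Ω → ℝ≥0∞) : Prop :=
  LocallyMeasurable μ V ∧
  ∃ TV, IsAbsorptionSG μ p T V TV ∧ IsC0Semigroup TV

/-- The truncation `(V ∧ n) ∨ (−n)` of an extended-real-valued rate, as a real function. -/
def truncE (V : Ω → EReal) (n : ℕ) : Ω → ℝ :=
  fun ω => (max (min (V ω) (n : EReal)) (-(n : EReal))).toReal

/-- `TV` is the absorption semigroup `T_V` of an extended-real-valued rate `V`:
`T_V(t) = s-lim_{n→∞} e^{t(A - (V∧n)∨(−n))}` (for `t ≥ 0`). -/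
def IsAbsorptionSGE (μ : Measure Ω) (p : ℝ≥0∞) [Fact (1 ≤ p)]
    (T : ℝ → Lp ℝ p μ →L[ℝ] Lp ℝ p μ) (V : Ω → EReal)
    (TV : ℝ → Lp ℝ p μ →L[ℝ] Lp ℝ p μ) : Prop :=
  ∃ S : ℕ → ℝ → Lp ℝ p μ →L[ℝ] Lp ℝ p μ,
    (∀ n, IsPerturbedSG μ p T (S n) (truncE V n)) ∧
    ∀ t : ℝ, 0 ≤ t → ∀ f, Tendsto (fun n => S n t f) atTop (𝓝 (TV t f))

/-- `T`-admissibility for an extended-real-valued absorption rate `V`. -/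
def AdmissibleE (μ : Measure Ω) (p : ℝ≥0∞) [Fact (1 ≤ p)]
    (T : ℝ → Lp ℝ p μ →L[ℝ] Lp ℝ p μ) (V : Ω → EReal) : Prop :=
  LocallyMeasurable μ V ∧
  ∃ TV, IsAbsorptionSGE μ p T V TV ∧ IsC0Semigroup TV

end Absorption

open Absorption
namespace AbsProof

set_option linter.unusedSectionVars false

section Banach
variable {E : Type*} [NormedAddCommGroup E] [NormedSpace ℝ E] [CompleteSpace E]

lemma locBdd {P : ℝ → E →L[ℝ] E} (hP : IsC0Semigroup P) (τ : ℝ) :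
    ∃ M : ℝ, 0 ≤ M ∧ ∀ t, 0 ≤ t → t ≤ τ → ‖P t‖ ≤ M := by
  have := banach_steinhaus (g := fun t : Set.Icc (0:ℝ) τ => P t) (by
    intro f
    have hc : ContinuousOn (fun t => P t f) (Set.Icc 0 τ) :=
      (hP.2 f).mono Set.Icc_subset_Ici_self
    obtain ⟨C, hC⟩ := isCompact_Icc.exists_bound_of_continuousOn hc
    exact ⟨C, fun i => hC i i.2⟩)
  obtain ⟨C, hC⟩ := this
  exact ⟨max C 0, le_max_right _ _, fun t h0 h1 => (hC ⟨t, h0, h1⟩).trans (le_max_left _ _)⟩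

lemma tendsto_sg {P : ℝ → E →L[ℝ] E} (hP : IsC0Semigroup P) {ι : Type*} {l : Filter ι}
    {a : ι → ℝ} {a0 : ℝ} {u : ι → E} {u0 : E} (ha : Tendsto a l (𝓝 a0))
    (hpos : ∀ᶠ i in l, 0 ≤ a i) (h0 : 0 ≤ a0) (hu : Tendsto u l (𝓝 u0)) :
    Tendsto (fun i => P (a i) (u i)) l (𝓝 (P a0 u0)) := by
  obtain ⟨M, hM0, hM⟩ := locBdd hP (a0 + 1)
  have h2 : Tendsto (fun i => P (a i) u0) l (𝓝 (P a0 u0)) :=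
    (hP.2 u0 a0 h0).tendsto.comp (tendsto_nhdsWithin_iff.2 ⟨ha, hpos⟩)
  have h1 : Tendsto (fun i => P (a i) (u i - u0)) l (𝓝 0) := by
    have h3 : Tendsto (fun i => M * ‖u i - u0‖) l (𝓝 0) := by
      have := ((hu.sub_const u0).norm).const_mul M
      simpa using this
    refine squeeze_zero_norm' ?_ h3
    filter_upwards [hpos, ha.eventually (gt_mem_nhds (lt_add_one a0))] with i hi hi2
    exact ((P (a i)).le_opNorm _).trans
      (mul_le_mul_of_nonneg_right (hM _ hi hi2.le) (norm_nonneg _))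
  have := h1.add h2
  simpa using this

lemma contOn_conv {P : ℝ → E →L[ℝ] E} (hP : IsC0Semigroup P) (B : E →L[ℝ] E)
    {t : ℝ} {u : ℝ → E} (hu : ContinuousOn u (Set.Icc 0 t)) :
    ContinuousOn (fun s => P (t - s) (B (u s))) (Set.Icc 0 t) := by
  intro s hs
  refine tendsto_sg hP ?_ ?_ (by linarith [hs.2]) ?_
  · exact (continuous_const.sub continuous_id).continuousWithinAt
  · filter_upwards [self_mem_nhdsWithin] with r hr
    linarith [hr.2]
  · exact (B.continuous.tendsto _).comp (hu s hs)

lemma gen_preserve {Q : ℝ → E →L[ℝ] E} (hQ : IsC0Semigroup Q) {f g : E}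
    (h : InGenerator Q f g) {s : ℝ} (hs : 0 ≤ s) : InGenerator Q (Q s f) (Q s g) := by
  have := ((Q s).continuous.tendsto g).comp h
  refine this.congr' ?_
  filter_upwards [self_mem_nhdsWithin] with t ht
  have ht : 0 < t := ht
  have e1 := hQ.1.2 s t hs ht.le
  have e2 := hQ.1.2 t s ht.le hs
  rw [add_comm, e1] at e2
  have := DFunLike.congr_fun e2 f
  simp only [ContinuousLinearMap.comp_apply] at this
  simp [this]

lemma gen_dense {Q : ℝ → E →L[ℝ] E} (hQ : IsC0Semigroup Q) (f : E) :
    f ∈ closure {v : E | ∃ g, InGenerator Q v g} := by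
  set q : ℝ → E := fun s => Q (max s 0) f with hq
  have hqc : Continuous q := by
    have : ContinuousOn (fun t => Q t f) (Set.Ici 0) := hQ.2 f
    exact this.comp_continuous (continuous_id.max continuous_const) (fun x => Set.mem_Ici.2 (le_max_right _ _))
  set F : ℝ → E := fun x => ∫ s in (0:ℝ)..x, q s with hF
  have hFd : ∀ x, HasDerivAt F (q x) x := fun x =>
    intervalIntegral.integral_hasDerivAt_right (hqc.intervalIntegrable _ _)
      hqc.stronglyMeasurable.stronglyMeasurableAtFilter hqc.continuousAt
  have hFs : ∀ x, Tendsto (fun r : ℝ => r⁻¹ • (F (x + r) - F x)) (𝓝[>] 0) (𝓝 (q x)) := fun x =>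
    (hasDerivAt_iff_tendsto_slope_zero.1 (hFd x)).mono_left
      (nhdsWithin_mono _ (fun r hr => ne_of_gt hr))
  have hF0 : F 0 = 0 := by simp [hF]
  have hq0 : q 0 = f := by simp [hq, hQ.1.1]
  have key : ∀ h : ℝ, 0 < h → InGenerator Q (F h) (q h - q 0) := by
    intro h hh
    refine ((hFs h).sub (hFs 0)).congr' ?_
    filter_upwards [self_mem_nhdsWithin] with r hr
    have hr : 0 < r := hr
    have e : Q r (F h) = F (h + r) - F r := by
      have e1 : Q r (F h) = ∫ s in (0:ℝ)..h, Q r (q s) :=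
        ((Q r).intervalIntegral_comp_comm (hqc.intervalIntegrable _ _)).symm
      have e2 : ∫ s in (0:ℝ)..h, Q r (q s) = ∫ s in (0:ℝ)..h, q (s + r) := by
        refine intervalIntegral.integral_congr ?_
        intro s hs
        rw [Set.uIcc_of_le hh.le] at hs
        have hs0 : 0 ≤ s := hs.1
        simp only [hq]
        rw [max_eq_left hs0, max_eq_left (by linarith), add_comm s r, hQ.1.2 r s hr.le hs0]
        rfl
      rw [e1, e2, intervalIntegral.integral_comp_add_right, zero_add]
      have := intervalIntegral.integral_add_adjacent_intervals
        (hqc.intervalIntegrable (μ := volume) 0 r) (hqc.intervalIntegrable r (h + r))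
      simp only [hF]
      rw [← this]; abel
    rw [e, zero_add, hF0, sub_zero, ← smul_sub]
    congr 1; abel
  have lim := hFs 0
  simp only [zero_add, hF0, sub_zero, hq0] at lim
  refine mem_closure_of_tendsto lim ?_
  filter_upwards [self_mem_nhdsWithin] with r hr
  refine ⟨r⁻¹ • (q r - q 0), ?_⟩
  have := (key r hr).const_smul r⁻¹
  refine this.congr ?_
  intro x
  rw [map_smul, ← smul_sub, smul_comm]

lemma tendsto_conv_integral {F : ℕ → ℝ → E} {G : ℝ → E} {t : ℝ} (ht : 0 ≤ t) (C : ℝ)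
    (hcont : ∀ n, ContinuousOn (F n) (Set.Icc 0 t))
    (hb : ∀ n, ∀ s ∈ Set.Icc 0 t, ‖F n s‖ ≤ C)
    (hlim : ∀ s ∈ Set.Icc 0 t, Tendsto (fun n => F n s) atTop (𝓝 (G s))) :
    Tendsto (fun n => ∫ s in (0:ℝ)..t, F n s) atTop (𝓝 (∫ s in (0:ℝ)..t, G s)) := by
  have hsub : Set.uIoc 0 t ⊆ Set.Icc 0 t := by
    rw [Set.uIoc_of_le ht]; exact Set.Ioc_subset_Icc_self
  refine intervalIntegral.tendsto_integral_filter_of_dominated_convergence (fun _ => C) ?_ ?_ ?_ ?_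
  · refine Eventually.of_forall fun n => ?_
    exact ((hcont n).mono hsub).aestronglyMeasurable measurableSet_uIoc
  · exact Eventually.of_forall fun n => Eventually.of_forall fun x hx => hb n x (hsub hx)
  · exact intervalIntegrable_const
  · exact Eventually.of_forall fun x hx => hlim x (hsub hx)

lemma duhamel {P Q : ℝ → E →L[ℝ] E} (hP : IsC0Semigroup P) (hQ : IsC0Semigroup Q)
    (B : E →L[ℝ] E) (h : ∀ f g, InGenerator Q f g → InGenerator P f (g - B f))
    {t : ℝ} (ht : 0 ≤ t) (f : E) :
    Q t f = P t f + ∫ s in (0:ℝ)..t, P (t - s) (B (Q s f)) := by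
  have hQc : ∀ f, ContinuousOn (fun s => Q s f) (Set.Icc 0 t) := fun f =>
    (hQ.2 f).mono Set.Icc_subset_Ici_self
  have dom : ∀ f g, InGenerator Q f g →
      Q t f = P t f + ∫ s in (0:ℝ)..t, P (t - s) (B (Q s f)) := by
    intro f g hfg
    have hi : IntervalIntegrable (fun s => P (t - s) (B (Q s f))) volume 0 t := by
      apply ContinuousOn.intervalIntegrable
      rw [Set.uIcc_of_le ht]
      exact contOn_conv hP B (hQc f)
    have hcont : ContinuousOn (fun s => P (t - s) (Q s f)) (Set.Icc 0 t) := by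
      have := contOn_conv hP (ContinuousLinearMap.id ℝ E) (hQc f)
      simpa using this
    have ftc := intervalIntegral.integral_eq_sub_of_hasDeriv_right_of_le ht hcont (f' :=
      fun s => P (t - s) (B (Q s f))) ?_ hi
    · rw [ftc]; simp [hP.1.1, hQ.1.1]
    intro s hs
    rw [hasDerivWithinAt_iff_tendsto_slope' (by simp)]
    set u := Q s f with hu
    have hg1 : InGenerator Q u (Q s g) := gen_preserve hQ hfg hs.1.le
    have hg2 := h _ _ hg1
    have hd : Tendsto (fun r : ℝ => r⁻¹ • (Q r u - u) - r⁻¹ • (P r u - u)) (𝓝[>] 0)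
        (𝓝 (B u)) := by
      have := hg1.sub hg2
      simpa using this
    have hsh : Tendsto (fun y : ℝ => y - s) (𝓝[>] s) (𝓝[>] 0) := by
      refine tendsto_nhdsWithin_iff.2 ⟨?_, ?_⟩
      · have : Tendsto (fun y : ℝ => y - s) (𝓝 s) (𝓝 (s - s)) :=
          (continuous_id.sub continuous_const).tendsto s
        rw [sub_self] at this
        exact this.mono_left nhdsWithin_le_nhds
      · filter_upwards [self_mem_nhdsWithin] with y hy
        exact Set.mem_Ioi.2 (sub_pos.2 (Set.mem_Ioi.1 hy))
    have hlt : ∀ᶠ y in 𝓝[>] s, y < t := nhdsWithin_le_nhds (gt_mem_nhds hs.2)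
    have hlim := tendsto_sg hP (l := 𝓝[>] s) (a := fun y => t - y) (a0 := t - s)
      (((continuous_const.sub continuous_id).tendsto s).mono_left nhdsWithin_le_nhds)
      (by filter_upwards [hlt] with y hy; linarith) (by linarith [hs.2]) (hd.comp hsh)
    refine hlim.congr' ?_
    filter_upwards [hlt, self_mem_nhdsWithin] with y hy hy2
    have hy2 : s < y := hy2
    have e1 : Q y f = Q (y - s) u := by
      have := hQ.1.2 (y - s) s (by linarith) hs.1.le
      rw [sub_add_cancel] at this
      rw [this]; rfl
    have e2 : P (t - s) u = P (t - y) (P (y - s) u) := by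
      have := hP.1.2 (t - y) (y - s) (by linarith) (by linarith)
      rw [sub_add_sub_cancel] at this
      rw [this]; rfl
    simp only [slope, vsub_eq_sub, Function.comp]
    rw [← hu, e1, e2, ← map_sub, ← map_smul, ← smul_sub]
    congr 2; abel
  obtain ⟨x, hx, hxl⟩ := mem_closure_iff_seq_limit.1 (gen_dense hQ f)
  obtain ⟨M, hM0, hM⟩ := locBdd hP t
  obtain ⟨N, hN0, hN⟩ := locBdd hQ t
  obtain ⟨K, hK⟩ := hxl.norm.bddAbove_range
  have hK' : ∀ n, ‖x n‖ ≤ K := fun n => hK ⟨n, rfl⟩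
  have hI := tendsto_conv_integral (F := fun n s => P (t - s) (B (Q s (x n))))
    (G := fun s => P (t - s) (B (Q s f))) ht (M * (‖B‖ * (N * K)))
    (fun n => contOn_conv hP B (hQc _)) (by
      intro n s hs
      refine ((P _).le_opNorm _).trans ?_
      refine mul_le_mul (hM _ (by linarith [hs.2]) (by linarith [hs.1])) ?_ (norm_nonneg _) hM0
      refine (B.le_opNorm _).trans ?_
      refine mul_le_mul_of_nonneg_left ?_ (norm_nonneg _)
      refine ((Q s).le_opNorm _).trans ?_
      exact mul_le_mul (hN _ hs.1 hs.2) (hK' n) (norm_nonneg _) hN0) (by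
      intro s hs
      exact (((P (t-s)).comp (B.comp (Q s))).continuous.tendsto f).comp hxl)
  have h1 := ((Q t).continuous.tendsto f).comp hxl
  have h2 := (((P t).continuous.tendsto f).comp hxl).add hI
  refine tendsto_nhds_unique h1 (h2.congr ?_)
  intro n
  obtain ⟨g, hg⟩ := hx n
  exact (dom _ _ hg).symm

lemma gen_of_duhamel {P R : ℝ → E →L[ℝ] E} (hP : IsC0Semigroup P) (hR : IsC0Semigroup R)
    (B : E →L[ℝ] E)
    (h : ∀ t, 0 ≤ t → ∀ f, R t f = P t f + ∫ s in (0:ℝ)..t, P (t - s) (B (R s f)))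
    (f g : E) : InGenerator R f g ↔ InGenerator P f (g - B f) := by
  have hJ : Tendsto (fun t : ℝ => t⁻¹ • ∫ s in (0:ℝ)..t, P (t - s) (B (R s f))) (𝓝[>] 0)
      (𝓝 (B f)) := by
    have hcc : Tendsto (fun x : ℝ × ℝ => P x.1 (B (R x.2 f))) (𝓝[≥] (0:ℝ) ×ˢ 𝓝[≥] (0:ℝ))
        (𝓝 (B f)) := by
      have h1 := tendsto_sg hR (l := 𝓝[≥] (0:ℝ) ×ˢ 𝓝[≥] (0:ℝ)) (a := fun x => x.2) (a0 := 0)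
        (u := fun _ => f) (u0 := f)
        ((tendsto_snd (f := 𝓝[≥] (0:ℝ))).mono_right nhdsWithin_le_nhds)
        (tendsto_snd.eventually self_mem_nhdsWithin) le_rfl tendsto_const_nhds
      have h2 := tendsto_sg hP (l := 𝓝[≥] (0:ℝ) ×ˢ 𝓝[≥] (0:ℝ)) (a := fun x => x.1) (a0 := 0)
        ((tendsto_fst (g := 𝓝[≥] (0:ℝ))).mono_right nhdsWithin_le_nhds)
        (tendsto_fst.eventually self_mem_nhdsWithin) le_rfl ((B.continuous.tendsto _).comp h1)
      simpa [hP.1.1, hR.1.1] using h2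
    rw [Metric.tendsto_nhds]
    intro ε hε
    have hev := (Metric.tendsto_nhds.1 hcc) (ε / 2) (half_pos hε)
    obtain ⟨U, hU, hU2⟩ := (eventually_prod_self_iff (r := fun a b : ℝ =>
      dist (P a (B (R b f))) (B f) < ε / 2)).1 hev
    rw [mem_nhdsGE_iff_exists_Ico_subset] at hU
    obtain ⟨δ, hδ, hδU⟩ := hU
    filter_upwards [Ioo_mem_nhdsGT (show (0:ℝ) < δ from hδ)] with t ht
    have hi : IntervalIntegrable (fun s => P (t - s) (B (R s f))) volume 0 t := by
      apply ContinuousOn.intervalIntegrable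
      rw [Set.uIcc_of_le ht.1.le]
      exact contOn_conv hP B ((hR.2 f).mono Set.Icc_subset_Ici_self)
    have e : t⁻¹ • (∫ s in (0:ℝ)..t, P (t - s) (B (R s f))) - B f
        = t⁻¹ • ∫ s in (0:ℝ)..t, (P (t - s) (B (R s f)) - B f) := by
      rw [intervalIntegral.integral_sub hi intervalIntegrable_const,
        intervalIntegral.integral_const, smul_sub, sub_zero, smul_smul, inv_mul_cancel₀ ht.1.ne',
        one_smul]
    rw [dist_eq_norm, e, norm_smul]
    have hb := intervalIntegral.norm_integral_le_of_norm_le_const (a := 0) (b := t) (C := ε / 2)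
      (f := fun s => P (t - s) (B (R s f)) - B f) (by
        intro s hs
        rw [Set.uIoc_of_le ht.1.le] at hs
        have := hU2 (t - s) (hδU ⟨by linarith [hs.2], by linarith [hs.1, ht.2]⟩) s
          (hδU ⟨hs.1.le, by linarith [hs.2, ht.2]⟩)
        rw [dist_eq_norm] at this
        exact this.le)
    rw [sub_zero, abs_of_pos ht.1] at hb
    rw [norm_inv, Real.norm_of_nonneg ht.1.le]
    calc _ ≤ t⁻¹ * (ε / 2 * t) := by
          exact mul_le_mul_of_nonneg_left hb (inv_nonneg.2 ht.1.le)
      _ = ε / 2 := by field_simp [ht.1.ne']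
      _ < ε := half_lt_self hε
  have e : ∀ᶠ t in 𝓝[>] (0:ℝ), t⁻¹ • (R t f - f) = t⁻¹ • (P t f - f) +
      t⁻¹ • ∫ s in (0:ℝ)..t, P (t - s) (B (R s f)) := by
    filter_upwards [self_mem_nhdsWithin] with t ht
    rw [h t (le_of_lt ht) f, ← smul_add]
    congr 1; abel
  constructor
  · intro hg
    refine (hg.sub hJ).congr' ?_
    filter_upwards [e] with t ht
    rw [ht]; abel
  · intro hg
    have := hg.add hJ
    rw [sub_add_cancel] at this
    refine this.congr' ?_
    filter_upwards [e] with t ht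
    rw [ht]

end Banach

lemma gronwall0 {φ : ℝ → ℝ} (hc : ContinuousOn φ (Set.Ici 0)) (hn : ∀ t, 0 ≤ t → 0 ≤ φ t)
    {K τ : ℝ} (hτ : 0 ≤ τ) (h : ∀ t, 0 ≤ t → t ≤ τ → φ t ≤ K * ∫ s in (0:ℝ)..t, φ s) :
    φ τ = 0 := by
  set q : ℝ → ℝ := fun s => φ (max s 0) with hq
  have hqc : Continuous q :=
    hc.comp_continuous (continuous_id.max continuous_const)
      (fun x => Set.mem_Ici.2 (le_max_right _ _))
  set F : ℝ → ℝ := fun x => ∫ s in (0:ℝ)..x, q s with hF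
  have hFd : ∀ x, HasDerivAt F (q x) x := fun x =>
    intervalIntegral.integral_hasDerivAt_right (hqc.intervalIntegrable _ _)
      hqc.stronglyMeasurable.stronglyMeasurableAtFilter hqc.continuousAt
  have hFe : ∀ t, 0 ≤ t → ∫ s in (0:ℝ)..t, φ s = F t := by
    intro t ht
    refine intervalIntegral.integral_congr ?_
    intro s hs
    rw [Set.uIcc_of_le ht] at hs
    simp [hq, max_eq_left hs.1]
  have hFn : ∀ t, 0 ≤ t → 0 ≤ F t := fun t ht =>
    intervalIntegral.integral_nonneg ht (fun s _ => hn _ (le_max_right _ _))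
  have hg := norm_le_gronwallBound_of_norm_deriv_right_le (f := F) (f' := q) (δ := 0) (K := K)
    (ε := 0) (a := 0) (b := τ) (fun x _ => (hFd x).continuousAt.continuousWithinAt)
    (fun x _ => (hFd x).hasDerivWithinAt) (by simp [hF]) (by
      intro x hx
      have hx0 : 0 ≤ x := hx.1
      have := h x hx0 hx.2.le
      rw [hFe x hx0] at this
      simp only [hq, max_eq_left hx0]
      rw [Real.norm_of_nonneg (hn x hx0), Real.norm_of_nonneg (hFn x hx0), add_zero]
      exact this) τ ⟨hτ, le_rfl⟩
  rw [gronwallBound_ε0_δ0] at hg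
  have hF0 : F τ = 0 := norm_le_zero_iff.1 hg
  have h1 := h τ hτ le_rfl
  rw [hFe τ hτ, hF0, mul_zero] at h1
  exact le_antisymm h1 (hn τ hτ)

section Lat
variable {E : Type*} [NormedAddCommGroup E] [Lattice E] [HasSolidNorm E] [IsOrderedAddMonoid E]
  [NormedSpace ℝ E] [IsOrderedModule ℝ E] [CompleteSpace E]

def PosOp (B : E →L[ℝ] E) : Prop := ∀ f, 0 ≤ f → 0 ≤ B f

def PosSG (P : ℝ → E →L[ℝ] E) : Prop := ∀ t, 0 ≤ t → PosOp (P t)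

lemma PosOp.mono {B : E →L[ℝ] E} (hB : PosOp B) {f g : E} (h : f ≤ g) : B f ≤ B g := by
  have := hB (g - f) (sub_nonneg.2 h)
  rwa [map_sub, sub_nonneg] at this

lemma norm_mono {f g : E} (h0 : 0 ≤ f) (h : f ≤ g) : ‖f‖ ≤ ‖g‖ :=
  norm_le_norm_of_abs_le_abs (by rwa [abs_of_nonneg h0, abs_of_nonneg (h0.trans h)])

lemma ii_nonneg {F : ℝ → E} {t : ℝ} (ht : 0 ≤ t) (h : ∀ s ∈ Set.Icc 0 t, 0 ≤ F s) :
    0 ≤ ∫ s in (0:ℝ)..t, F s := by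
  rw [intervalIntegral.integral_of_le ht]
  refine integral_nonneg_of_ae ?_
  rw [EventuallyLE, ae_restrict_iff' measurableSet_Ioc]
  exact Eventually.of_forall fun s hs => h s (Set.Ioc_subset_Icc_self hs)

lemma pos_of_duhamel {P Q : ℝ → E →L[ℝ] E} (hP : IsC0Semigroup P) (hQ : IsC0Semigroup Q)
    {B : E →L[ℝ] E} (hPp : PosSG P) (hB : PosOp B)
    (h : ∀ t, 0 ≤ t → ∀ f, Q t f = P t f + ∫ s in (0:ℝ)..t, P (t - s) (B (Q s f))) :
    PosSG Q := by
  intro τ hτ f hf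
  obtain ⟨M, hM0, hM⟩ := locBdd hP τ
  have hnc : ContinuousOn (fun t => (Q t f)⁻) (Set.Ici 0) := by
    have : Continuous (fun x : E => x⁻) := by
      simp only [negPart_def]
      exact continuous_neg.sup continuous_const
    exact this.comp_continuousOn (hQ.2 f)
  have key : ‖(Q τ f)⁻‖ = 0 := by
    refine gronwall0 (φ := fun t => ‖(Q t f)⁻‖) (K := M * ‖B‖) hnc.norm
      (fun _ _ => norm_nonneg _) hτ ?_
    intro t ht htτ
    have c1 : ContinuousOn (fun s => P (t - s) (B (Q s f))) (Set.Icc 0 t) :=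
      contOn_conv hP B ((hQ.2 f).mono Set.Icc_subset_Ici_self)
    have c2 : ContinuousOn (fun s => P (t - s) (B (Q s f)⁻)) (Set.Icc 0 t) :=
      contOn_conv hP B (hnc.mono Set.Icc_subset_Ici_self)
    have i1 : IntervalIntegrable (fun s => P (t - s) (B (Q s f))) volume 0 t := by
      apply ContinuousOn.intervalIntegrable; rwa [Set.uIcc_of_le ht]
    have i2 : IntervalIntegrable (fun s => P (t - s) (B (Q s f)⁻)) volume 0 t := by
      apply ContinuousOn.intervalIntegrable; rwa [Set.uIcc_of_le ht]
    set w := ∫ s in (0:ℝ)..t, P (t - s) (B (Q s f)⁻) with hw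
    have hw0 : 0 ≤ w := ii_nonneg ht fun s hs =>
      hPp _ (by linarith [hs.2]) _ (hB _ (negPart_nonneg _))
    have hsum : 0 ≤ (∫ s in (0:ℝ)..t, P (t - s) (B (Q s f))) + w := by
      rw [hw, ← intervalIntegral.integral_add i1 i2]
      refine ii_nonneg ht fun s hs => ?_
      rw [← map_add, ← map_add]
      refine hPp _ (by linarith [hs.2]) _ (hB _ ?_)
      have := neg_le_negPart (Q s f)
      exact neg_le_iff_add_nonneg'.1 this
    have hle : (Q t f)⁻ ≤ w := by
      rw [negPart_def]
      refine sup_le ?_ hw0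
      rw [neg_le_iff_add_nonneg', h t ht f, add_assoc]
      exact add_nonneg (hPp t ht f hf) hsum
    refine (norm_mono (negPart_nonneg _) hle).trans ?_
    rw [← intervalIntegral.integral_const_mul]
    refine intervalIntegral.norm_integral_le_of_norm_le ht ?_ ?_
    · refine Eventually.of_forall fun s hs => ?_
      refine ((P _).le_opNorm _).trans ?_
      rw [mul_assoc]
      exact mul_le_mul (hM _ (by linarith [hs.2]) (by linarith [hs.1])) (B.le_opNorm _)
        (norm_nonneg _) hM0
    · apply ContinuousOn.intervalIntegrable
      rw [Set.uIcc_of_le ht]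
      exact (hnc.norm.mono Set.Icc_subset_Ici_self).const_smul (M * ‖B‖)
  have := norm_eq_zero.1 key
  exact negPart_eq_zero.1 this

lemma le_of_duhamel {P Q : ℝ → E →L[ℝ] E} 
    {B : E →L[ℝ] E} (hPp : PosSG P) (hQp : PosSG Q) (hB : PosOp B)
    (h : ∀ t, 0 ≤ t → ∀ f, Q t f = P t f + ∫ s in (0:ℝ)..t, P (t - s) (B (Q s f)))
    {t : ℝ} (ht : 0 ≤ t) {f : E} (hf : 0 ≤ f) : P t f ≤ Q t f := by
  rw [h t ht f]
  refine le_add_of_nonneg_right (ii_nonneg ht fun s hs => ?_)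
  exact hPp _ (by linarith [hs.2]) _ (hB _ (hQp _ hs.1 _ hf))

lemma norm_le_of_dom {G T : E →L[ℝ] E} (hG : PosOp G) (h : ∀ f, 0 ≤ f → G f ≤ T f) :
    ‖G‖ ≤ ‖T‖ := by
  refine G.opNorm_le_bound (norm_nonneg _) fun f => ?_
  have h1 : |G f| ≤ T |f| := by
    refine (abs_le'.2 ⟨hG.mono (le_abs_self f), ?_⟩).trans (h _ (abs_nonneg f))
    rw [← map_neg]
    exact hG.mono (neg_le_abs f)
  have h2 : ‖G f‖ ≤ ‖T |f|‖ :=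
    norm_le_norm_of_abs_le_abs (h1.trans (le_abs_self _))
  refine h2.trans ((T.le_opNorm _).trans ?_)
  rw [norm_abs_eq_norm]

lemma tendsto_op {G : ℕ → E →L[ℝ] E} {G0 : E →L[ℝ] E} {C : ℝ} (hC : ∀ n, ‖G n‖ ≤ C)
    (h : ∀ f, Tendsto (fun n => G n f) atTop (𝓝 (G0 f))) {u : ℕ → E} {u0 : E}
    (hu : Tendsto u atTop (𝓝 u0)) : Tendsto (fun n => G n (u n)) atTop (𝓝 (G0 u0)) := by
  have h1 : Tendsto (fun n => G n (u n - u0)) atTop (𝓝 0) := by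
    have h3 : Tendsto (fun i => C * ‖u i - u0‖) atTop (𝓝 0) := by
      have := ((hu.sub_const u0).norm).const_mul C
      simpa using this
    refine squeeze_zero_norm (fun n => ?_) h3
    exact ((G n).le_opNorm _).trans (mul_le_mul_of_nonneg_right (hC n) (norm_nonneg _))
  simpa using h1.add (h u0)

lemma sg_limit {G : ℕ → ℝ → E →L[ℝ] E} {G0 T : ℝ → E →L[ℝ] E}
    (hs : ∀ n, IsSemigroup (G n)) (hC : ∀ n t, 0 ≤ t → ‖G n t‖ ≤ ‖T t‖)
    (h : ∀ t, 0 ≤ t → ∀ f, Tendsto (fun n => G n t f) atTop (𝓝 (G0 t f))) :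
    IsSemigroup G0 := by
  constructor
  · ext1 f
    refine tendsto_nhds_unique (h 0 le_rfl f) ?_
    simp [(hs _).1]
  · intro s t hs0 ht0
    ext1 f
    refine tendsto_nhds_unique (h (s + t) (add_nonneg hs0 ht0) f) ?_
    have := tendsto_op (fun n => hC n s hs0) (h s hs0) (h t ht0 f)
    refine this.congr fun n => ?_
    rw [(hs n).2 s t hs0 ht0]; rfl

lemma c0_of_squeeze {G T TV : ℝ → E →L[ℝ] E} (hG : IsSemigroup G) (hGp : PosSG G)
    (hT : IsC0Semigroup T) (hTV : IsC0Semigroup TV)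
    (h1 : ∀ t, 0 ≤ t → ∀ f, 0 ≤ f → TV t f ≤ G t f)
    (h2 : ∀ t, 0 ≤ t → ∀ f, 0 ≤ f → G t f ≤ T t f) : IsC0Semigroup G := by
  refine ⟨hG, ?_⟩
  have at0p : ∀ f, 0 ≤ f → Tendsto (fun t => G t f) (𝓝[≥] 0) (𝓝 f) := by
    intro f hf
    have a := hTV.2 f 0 Set.self_mem_Ici
    have b := hT.2 f 0 Set.self_mem_Ici
    simp only [ContinuousWithinAt, hTV.1.1, hT.1.1, ContinuousLinearMap.id_apply] at a b
    have c : Tendsto (fun t => G t f - TV t f) (𝓝[≥] 0) (𝓝 0) := by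
      have d := (b.sub a).norm
      rw [sub_self, norm_zero] at d
      refine squeeze_zero_norm' ?_ d
      filter_upwards [self_mem_nhdsWithin] with t ht
      exact norm_mono (sub_nonneg.2 (h1 t ht f hf)) (sub_le_sub_right (h2 t ht f hf) _)
    simpa using c.add a
  have at0 : ∀ f, Tendsto (fun t => G t f) (𝓝[≥] 0) (𝓝 f) := by
    intro f
    have := (at0p f⁺ (posPart_nonneg f)).sub (at0p f⁻ (negPart_nonneg f))
    rw [posPart_sub_negPart] at this
    refine this.congr fun t => ?_
    rw [← map_sub, posPart_sub_negPart]
  intro f t ht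
  have ht : 0 ≤ t := ht
  obtain ⟨M, hM0, hM⟩ := locBdd hT (t + 1)
  have hbd : ∀ s, 0 ≤ s → s ≤ t + 1 → ‖G s‖ ≤ M := fun s a b =>
    (norm_le_of_dom (hGp s a) (h2 s a)).trans (hM s a b)
  have aux : ∀ a b, 0 ≤ a → a ≤ b → b ≤ t + 1 → ‖G b f - G a f‖ ≤ M * ‖G (b - a) f - f‖ := by
    intro a b ha hab hb
    have := hG.2 a (b - a) ha (by linarith)
    rw [add_sub_cancel] at this
    rw [this, ContinuousLinearMap.comp_apply, ← map_sub]
    exact ((G a).le_opNorm _).trans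
      (mul_le_mul_of_nonneg_right (hbd a ha (by linarith)) (norm_nonneg _))
  have hsh : Tendsto (fun s : ℝ => |s - t|) (𝓝[Set.Ici 0] t) (𝓝[≥] 0) := by
    refine tendsto_nhdsWithin_iff.2 ⟨?_, Eventually.of_forall fun s => Set.mem_Ici.2 (abs_nonneg _)⟩
    have : Tendsto (fun s : ℝ => |s - t|) (𝓝 t) (𝓝 |t - t|) :=
      ((continuous_id.sub continuous_const).abs).tendsto t
    rw [sub_self, abs_zero] at this
    exact this.mono_left nhdsWithin_le_nhds
  have hz : Tendsto (fun s => M * ‖G |s - t| f - f‖) (𝓝[Set.Ici 0] t) (𝓝 0) := by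
    have := ((((at0 f).comp hsh).sub_const f).norm).const_mul M
    simpa using this
  have hfin : Tendsto (fun s => G s f - G t f) (𝓝[Set.Ici 0] t) (𝓝 0) := by
    refine squeeze_zero_norm' ?_ hz
    filter_upwards [self_mem_nhdsWithin, nhdsWithin_le_nhds (gt_mem_nhds (lt_add_one t))]
      with s hs hs1
    have hs : 0 ≤ s := hs
    rcases le_total s t with hst | hst
    · rw [norm_sub_rev, abs_sub_comm, abs_of_nonneg (sub_nonneg.2 hst)]
      exact aux s t hs hst (by linarith)
    · rw [abs_of_nonneg (sub_nonneg.2 hst)]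
      exact aux t s ht hst hs1.le
  exact tendsto_sub_nhds_zero_iff.1 hfin

end Lat

section Pert
variable {E : Type*} [NormedAddCommGroup E] [Lattice E] [HasSolidNorm E] [IsOrderedAddMonoid E]
  [NormedSpace ℝ E] [IsOrderedModule ℝ E] [CompleteSpace E]

def Pert (T S : ℝ → E →L[ℝ] E) (B : E →L[ℝ] E) : Prop :=
  IsC0Semigroup S ∧ ∀ f g, InGenerator S f g ↔ InGenerator T f (g + B f)

lemma pert_self {T : ℝ → E →L[ℝ] E} (hT : IsC0Semigroup T) : Pert T T 0 :=
  ⟨hT, fun f g => by simp⟩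

lemma pert_duhamel {T S1 S2 : ℝ → E →L[ℝ] E} {B1 B2 : E →L[ℝ] E} (h1 : Pert T S1 B1)
    (h2 : Pert T S2 B2) (t : ℝ) (ht : 0 ≤ t) (f : E) :
    S1 t f = S2 t f + ∫ s in (0:ℝ)..t, S2 (t - s) ((B2 - B1) (S1 s f)) := by
  refine duhamel h2.1 h1.1 (B2 - B1) (fun f g hfg => ?_) ht f
  rw [h2.2]
  have := (h1.2 f g).1 hfg
  convert this using 1
  simp only [sub_apply]
  abel

lemma scale_c0 {T : ℝ → E →L[ℝ] E} (hT : IsC0Semigroup T) (c : ℝ) :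
    IsC0Semigroup (fun t => Real.exp (-(c * t)) • T t) := by
  refine ⟨⟨by simp [hT.1.1], fun s t hs ht => ?_⟩, fun f => ?_⟩
  · ext1 f
    simp only [hT.1.2 s t hs ht, smul_apply, ContinuousLinearMap.comp_apply,
      map_smul, smul_smul, ← Real.exp_add]
    congr 2; ring
  · have : ContinuousOn (fun t : ℝ => Real.exp (-(c * t))) (Set.Ici 0) := by fun_prop
    exact this.smul (hT.2 f)

lemma scale_gen {T : ℝ → E →L[ℝ] E} (c : ℝ) {f g : E} (h : InGenerator T f g) :
    InGenerator (fun t => Real.exp (-(c * t)) • T t) f (g - c • f) := by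
  have h1 : Tendsto (fun t : ℝ => Real.exp (-(c * t))) (𝓝[>] 0) (𝓝 1) := by
    have : Continuous (fun t : ℝ => Real.exp (-(c * t))) := by fun_prop
    have := this.tendsto 0
    simp only [mul_zero, neg_zero, Real.exp_zero] at this
    exact this.mono_left nhdsWithin_le_nhds
  have h2 : Tendsto (fun t : ℝ => t⁻¹ * (Real.exp (-(c * t)) - 1)) (𝓝[>] 0) (𝓝 (-c)) := by
    have hd : HasDerivAt (fun t : ℝ => Real.exp (-(c * t))) (-c) 0 := by
      have : HasDerivAt (fun t : ℝ => -(c * t)) (-c) 0 := by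
        have h5 := (hasDerivAt_id (0:ℝ)).const_mul (-c)
        rw [mul_one] at h5
        refine h5.congr_of_eventuallyEq (Eventually.of_forall fun t => ?_)
        simp
      simpa using this.exp
    have := (hasDerivAt_iff_tendsto_slope_zero.1 hd).mono_left
      (nhdsWithin_mono _ (fun r (hr : 0 < r) => ne_of_gt hr) : 𝓝[>] (0:ℝ) ≤ 𝓝[≠] 0)
    simpa using this
  have h3 := (h1.smul h).add (h2.smul_const f)
  rw [one_smul, neg_smul, ← sub_eq_add_neg] at h3
  refine h3.congr fun t => ?_
  simp only [smul_apply]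
  module

lemma pert_pos {T S : ℝ → E →L[ℝ] E} {B : E →L[ℝ] E} (hT : IsC0Semigroup T) (hTp : PosSG T)
    (h : Pert T S B) (c : ℝ) (hc : ∀ f, 0 ≤ f → B f ≤ c • f) : PosSG S := by
  have hP := scale_c0 hT c
  refine pos_of_duhamel (B := c • ContinuousLinearMap.id ℝ E - B) hP h.1 ?_ ?_ ?_
  · intro t ht f hf
    exact smul_nonneg (Real.exp_nonneg _) (hTp t ht f hf)
  · intro f hf
    simpa using hc f hf
  · intro t ht f
    refine duhamel hP h.1 _ (fun f g hfg => ?_) ht f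
    have := scale_gen c ((h.2 f g).1 hfg)
    convert this using 1
    simp only [sub_apply, smul_apply,
      ContinuousLinearMap.id_apply]
    abel

lemma pert_le {T S1 S2 : ℝ → E →L[ℝ] E} {B1 B2 : E →L[ℝ] E} (h1 : Pert T S1 B1)
    (h2 : Pert T S2 B2) (p1 : PosSG S1) (p2 : PosSG S2) (hB : ∀ f, 0 ≤ f → B1 f ≤ B2 f)
    {t : ℝ} (ht : 0 ≤ t) {f : E} (hf : 0 ≤ f) : S2 t f ≤ S1 t f :=
  le_of_duhamel p2 p1 (B := B2 - B1) (fun f hf => by simpa using hB f hf)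
    (pert_duhamel h1 h2) ht hf

lemma gen_limit {T TV R : ℝ → E →L[ℝ] E} {S S' : ℕ → ℝ → E →L[ℝ] E} {B B' : ℕ → E →L[ℝ] E}
    {D : E →L[ℝ] E} (hT : IsC0Semigroup T) (hTV : IsC0Semigroup TV) (hR : IsC0Semigroup R)
    (hS : ∀ m, Pert T (S m) (B m)) (hS' : ∀ m, Pert T (S' m) (B' m))
    (nS : ∀ m t, 0 ≤ t → ‖S m t‖ ≤ ‖T t‖) (nS' : ∀ m t, 0 ≤ t → ‖S' m t‖ ≤ ‖T t‖)
    (hD : ∀ m, B m - B' m = D)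
    (lS : ∀ t, 0 ≤ t → ∀ f, Tendsto (fun n => S n t f) atTop (𝓝 (TV t f)))
    (lS' : ∀ t, 0 ≤ t → ∀ f, Tendsto (fun n => S' n t f) atTop (𝓝 (R t f))) (f g : E) :
    InGenerator R f g ↔ InGenerator TV f (g - D f) := by
  refine gen_of_duhamel hTV hR D (fun t ht f => ?_) f g
  obtain ⟨M, hM0, hM⟩ := locBdd hT t
  have hI := tendsto_conv_integral (F := fun n s => S n (t - s) (D (S' n s f)))
    (G := fun s => TV (t - s) (D (R s f))) ht (M * (‖D‖ * (M * ‖f‖)))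
    (fun n => contOn_conv (hS n).1 D (((hS' n).1.2 f).mono Set.Icc_subset_Ici_self)) (by
      intro n s hs
      have h0 : 0 ≤ t - s := by linarith [hs.2]
      refine ((S n _).le_opNorm _).trans ?_
      refine mul_le_mul ((nS n _ h0).trans (hM _ h0 (by linarith [hs.1]))) ?_ (norm_nonneg _) hM0
      refine (D.le_opNorm _).trans ?_
      refine mul_le_mul_of_nonneg_left ?_ (norm_nonneg _)
      refine ((S' n s).le_opNorm _).trans ?_
      exact mul_le_mul_of_nonneg_right ((nS' n _ hs.1).trans (hM _ hs.1 hs.2)) (norm_nonneg _)) (by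
      intro s hs
      have h0 : 0 ≤ t - s := by linarith [hs.2]
      exact tendsto_op (fun n => nS n _ h0) (lS _ h0)
        ((D.continuous.tendsto _).comp (lS' s hs.1 f)))
  refine tendsto_nhds_unique (lS' t ht f) (((lS t ht f).add hI).congr fun n => ?_)
  have := pert_duhamel (hS' n) (hS n) t ht f
  rw [hD n] at this
  exact this.symm

end Pert

section LpPart
variable {Ω : Type*} [MeasurableSpace Ω] {μ : Measure Ω} {p : ℝ≥0∞} [Fact (1 ≤ p)]

instance lpOrderedModule : IsOrderedModule ℝ (Lp ℝ p μ) where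
  smul_le_smul_of_nonneg_left a ha f g hfg := by
    rw [← Lp.coeFn_le] at hfg ⊢
    filter_upwards [hfg, Lp.coeFn_smul a f, Lp.coeFn_smul a g] with ω h1 h2 h3
    rw [h2, h3]
    exact mul_le_mul_of_nonneg_left h1 ha
  smul_le_smul_of_nonneg_right f hf a b hab := by
    rw [← Lp.coeFn_nonneg] at hf
    rw [← Lp.coeFn_le]
    filter_upwards [hf, Lp.coeFn_smul a f, Lp.coeFn_smul b f] with ω h1 h2 h3
    rw [h2, h3]
    exact mul_le_mul_of_nonneg_right hab h1

lemma aesm_mul (hp : p ≠ ∞) {W : Ω → ℝ} (hW : LocallyMeasurable μ W) (f : Lp ℝ p μ) :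
    AEStronglyMeasurable (fun ω => W ω * f ω) μ := by
  have hp0 : p ≠ 0 := (zero_lt_one.trans_le (Fact.out : 1 ≤ p)).ne'
  obtain ⟨t, ht, hft, hσ⟩ := (Lp.finStronglyMeasurable f hp0 hp).exists_set_sigmaFinite
  have hWt : AEMeasurable W (μ.restrict t) := by
    have hu : (⋃ i, spanningSets (μ.restrict t) i) = Set.univ := iUnion_spanningSets _
    rw [← Measure.restrict_univ (μ := μ.restrict t), ← hu, aemeasurable_iUnion_iff]
    intro i
    have hm := measurableSet_spanningSets (μ.restrict t) i
    rw [Measure.restrict_restrict hm]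
    have hfin : μ (spanningSets (μ.restrict t) i ∩ t) < ∞ := by
      rw [← Measure.restrict_apply hm]
      exact measure_spanningSets_lt_top _ i
    obtain ⟨g, hg, hge⟩ := hW _ (hm.inter ht) hfin
    exact ⟨g, hg, hge⟩
  have e : (fun ω => W ω * f ω) = t.indicator (fun ω => W ω * f ω) := by
    ext ω
    by_cases h : ω ∈ t
    · simp [h]
    · simp [h, hft ω h]
  rw [e, aestronglyMeasurable_indicator_iff ht]
  exact hWt.aestronglyMeasurable.mul ((Lp.aestronglyMeasurable f).restrict)

lemma exists_mul (hp : p ≠ ∞) {W : Ω → ℝ} (hW : LocallyMeasurable μ W) {C : ℝ}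
    (hC : ∀ ω, |W ω| ≤ C) :
    ∃ B : Lp ℝ p μ →L[ℝ] Lp ℝ p μ, ∀ f, B f =ᵐ[μ] fun ω => W ω * f ω := by
  have hb : ∀ f : Lp ℝ p μ, ∀ᵐ ω ∂μ, ‖W ω * f ω‖ ≤ C * ‖f ω‖ := fun f =>
    Eventually.of_forall fun ω => by
      rw [norm_mul]; exact mul_le_mul_of_nonneg_right (hC ω) (norm_nonneg _)
  have hm : ∀ f : Lp ℝ p μ, MemLp (fun ω => W ω * f ω) p μ := fun f =>
    (Lp.memLp f).of_le_mul (aesm_mul hp hW f) (hb f)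
  refine ⟨LinearMap.mkContinuous
    { toFun := fun f => (hm f).toLp _
      map_add' := fun f g => ?_
      map_smul' := fun c f => ?_ } C (fun f => ?_), fun f => (hm f).coeFn_toLp⟩
  · refine Lp.ext ?_
    filter_upwards [(hm f).coeFn_toLp, (hm g).coeFn_toLp, (hm (f + g)).coeFn_toLp,
      Lp.coeFn_add f g, Lp.coeFn_add ((hm f).toLp _) ((hm g).toLp _)] with ω a b c d e
    rw [c, e, Pi.add_apply, a, b, d, Pi.add_apply, mul_add]
  · refine Lp.ext ?_
    filter_upwards [(hm f).coeFn_toLp, (hm (c • f)).coeFn_toLp,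
      Lp.coeFn_smul c f, Lp.coeFn_smul c ((hm f).toLp _)] with ω a b d e
    simp only [RingHom.id_apply]
    rw [b, e, Pi.smul_apply, a, d, Pi.smul_apply, smul_eq_mul, smul_eq_mul]
    ring
  · refine Lp.norm_le_mul_norm_of_ae_le_mul ?_
    filter_upwards [(hm f).coeFn_toLp, hb f] with ω a b
    simp only [LinearMap.coe_mk, AddHom.coe_mk]
    rw [a]; exact b

lemma mul_mono {W1 W2 : Ω → ℝ} {B1 B2 : Lp ℝ p μ →L[ℝ] Lp ℝ p μ}
    (h1 : ∀ f, B1 f =ᵐ[μ] fun ω => W1 ω * f ω) (h2 : ∀ f, B2 f =ᵐ[μ] fun ω => W2 ω * f ω)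
    (h : ∀ ω, W1 ω ≤ W2 ω) (f : Lp ℝ p μ) (hf : 0 ≤ f) : B1 f ≤ B2 f := by
  rw [← Lp.coeFn_nonneg] at hf
  rw [← Lp.coeFn_le]
  filter_upwards [hf, h1 f, h2 f] with ω a b c
  rw [b, c]
  exact mul_le_mul_of_nonneg_right (h ω) a

lemma pert_of_isPerturbed {T S : ℝ → Lp ℝ p μ →L[ℝ] Lp ℝ p μ} {W : Ω → ℝ}
    {B : Lp ℝ p μ →L[ℝ] Lp ℝ p μ} (hB : ∀ f, B f =ᵐ[μ] fun ω => W ω * f ω)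
    (h : IsPerturbedSG μ p T S W) : Pert T S B := by
  refine ⟨h.1, fun f g => ?_⟩
  rw [h.2]
  constructor
  · rintro ⟨g0, h0, he⟩
    convert h0
    refine Lp.ext ?_
    filter_upwards [he, hB f, Lp.coeFn_add g (B f)] with ω a b c
    rw [c, Pi.add_apply, a, b]; ring
  · intro h0
    refine ⟨_, h0, ?_⟩
    filter_upwards [hB f, Lp.coeFn_add g (B f)] with ω b c
    rw [c, Pi.add_apply, b]; ring

lemma lp_superadd (hp : p ≠ ∞) {f g : Lp ℝ p μ} (hf : 0 ≤ f) (hg : 0 ≤ g) :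
    ‖f‖ ^ p.toReal + ‖g‖ ^ p.toReal ≤ ‖f + g‖ ^ p.toReal := by
  have h1p : 1 ≤ p := Fact.out
  have hp0 : p ≠ 0 := (zero_lt_one.trans_le h1p).ne'
  have hq : 1 ≤ p.toReal := by
    have := ENNReal.toReal_mono hp h1p
    simpa using this
  have key : ∀ f : Lp ℝ p μ, eLpNorm f p μ ^ p.toReal = ∫⁻ ω, ‖f ω‖ₑ ^ p.toReal ∂μ := by
    intro f
    rw [eLpNorm_eq_lintegral_rpow_enorm_toReal hp0 hp, ← ENNReal.rpow_mul,
      one_div, inv_mul_cancel₀ (by linarith), ENNReal.rpow_one]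
  have hne : ∀ f : Lp ℝ p μ, eLpNorm f p μ ^ p.toReal ≠ ∞ := fun f =>
    ENNReal.rpow_ne_top_of_nonneg (by linarith) (Lp.eLpNorm_ne_top f)
  have main : eLpNorm f p μ ^ p.toReal + eLpNorm g p μ ^ p.toReal
      ≤ eLpNorm (f + g : Lp ℝ p μ) p μ ^ p.toReal := by
    rw [key, key, key, ← lintegral_add_left']
    · refine lintegral_mono_ae ?_
      rw [← Lp.coeFn_nonneg] at hf hg
      filter_upwards [hf, hg, Lp.coeFn_add f g] with ω a b c
      have a : 0 ≤ f ω := a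
      have b : 0 ≤ g ω := b
      rw [c, Pi.add_apply]
      refine (ENNReal.add_rpow_le_rpow_add _ _ hq).trans (le_of_eq ?_)
      rw [Real.enorm_of_nonneg a, Real.enorm_of_nonneg b, Real.enorm_of_nonneg (add_nonneg a b),
        ENNReal.ofReal_add a b]
    · exact (Lp.aestronglyMeasurable f).enorm.pow_const _
  have := ENNReal.toReal_mono (hne _) main
  rw [ENNReal.toReal_add (hne _) (hne _), ← ENNReal.toReal_rpow, ← ENNReal.toReal_rpow,
    ← ENNReal.toReal_rpow] at this
  simpa only [Lp.norm_def] using this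

lemma lp_mono_conv (hp : p ≠ ∞) {u : ℕ → Lp ℝ p μ} {g : Lp ℝ p μ} (h0 : ∀ n, 0 ≤ u n)
    (hm : Monotone u) (hg : ∀ n, u n ≤ g) : ∃ v, Tendsto u atTop (𝓝 v) := by
  have h1p : 1 ≤ p := Fact.out
  have hq : 1 ≤ p.toReal := by
    have := ENNReal.toReal_mono hp h1p
    simpa using this
  set q := p.toReal with hqdef
  have hsup : ∀ n m, n ≤ m → ‖u n‖ ^ q + ‖u m - u n‖ ^ q ≤ ‖u m‖ ^ q := by
    intro n m hnm
    have := lp_superadd hp (h0 n) (sub_nonneg.2 (hm hnm))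
    rwa [add_sub_cancel] at this
  have hmono : Monotone fun n => ‖u n‖ ^ q := fun n m hnm =>
    Real.rpow_le_rpow (norm_nonneg _) (norm_mono (h0 n) (hm hnm)) (by linarith)
  have hbd : BddAbove (Set.range fun n => ‖u n‖ ^ q) := by
    refine ⟨‖g‖ ^ q, ?_⟩
    rintro _ ⟨n, rfl⟩
    exact Real.rpow_le_rpow (norm_nonneg _) (norm_mono (h0 n) (hg n)) (by linarith)
  have hlim := tendsto_atTop_ciSup hmono hbd
  set a := ⨆ n, ‖u n‖ ^ q with ha
  have hle : ∀ n, ‖u n‖ ^ q ≤ a := fun n => le_ciSup hbd n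
  refine cauchySeq_tendsto_of_complete
    (cauchySeq_of_le_tendsto_0' (fun n => (a - ‖u n‖ ^ q) ^ q⁻¹) ?_ ?_)
  · intro n m hnm
    rw [dist_comm, dist_eq_norm]
    rw [Real.le_rpow_inv_iff_of_pos (norm_nonneg _) (sub_nonneg.2 (hle n)) (by linarith)]
    linarith [hsup n m hnm, hle m]
  · have h1 : Tendsto (fun n => a - ‖u n‖ ^ q) atTop (𝓝 0) := by
      have := hlim.const_sub a
      rwa [sub_self] at this
    have := h1.rpow_const (p := q⁻¹) (Or.inr (inv_nonneg.2 (by linarith)))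
    rwa [Real.zero_rpow (inv_ne_zero (by linarith))] at this

lemma trunc_nonneg (V : Ω → ℝ≥0∞) (n : ℕ) (ω : Ω) : 0 ≤ trunc V n ω := ENNReal.toReal_nonneg

lemma trunc_le (V : Ω → ℝ≥0∞) (n : ℕ) (ω : Ω) : trunc V n ω ≤ n := by
  have := ENNReal.toReal_mono (ENNReal.natCast_ne_top n) (min_le_right (V ω) (n : ℝ≥0∞))
  simpa [trunc] using this

lemma trunc_mono {V V' : Ω → ℝ≥0∞} (h : ∀ ω, V ω ≤ V' ω) (n : ℕ) (ω : Ω) :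
    trunc V n ω ≤ trunc V' n ω :=
  ENNReal.toReal_mono (ne_top_of_le_ne_top (ENNReal.natCast_ne_top n) (min_le_right _ _))
    (min_le_min_right _ (h ω))

lemma trunc_lm {V : Ω → ℝ≥0∞} (hV : LocallyMeasurable μ V) (n : ℕ) :
    LocallyMeasurable μ (trunc V n) := by
  intro B hB hfin
  obtain ⟨g, hg, he⟩ := hV B hB hfin
  refine ⟨trunc g n, ENNReal.measurable_toReal.comp (hg.min measurable_const), ?_⟩
  filter_upwards [he] with ω h
  simp [trunc, h]

lemma resid_lm {V : Ω → ℝ≥0∞} (hV : LocallyMeasurable μ V) (n : ℕ) :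
    LocallyMeasurable μ (resid V n) := by
  intro B hB hfin
  obtain ⟨g, hg, he⟩ := hV B hB hfin
  refine ⟨resid g n, hg.sub (hg.min measurable_const), ?_⟩
  filter_upwards [he] with ω h
  simp [resid, h]

lemma trunc_resid (V : Ω → ℝ≥0∞) (n m : ℕ) (ω : Ω) :
    trunc V (m + n) ω - trunc (resid V n) m ω = trunc V n ω := by
  unfold trunc resid
  generalize V ω = v
  induction v with
  | top =>
    have : ((m : ℝ≥0∞) + n).toReal = m + n := by
      rw [ENNReal.toReal_add (ENNReal.natCast_ne_top m) (ENNReal.natCast_ne_top n)]; simp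
    simp [this]
  | coe v =>
    have e1 : ∀ k : ℕ, (k : ℝ≥0∞) = ((k : NNReal) : ℝ≥0∞) := fun k => by simp
    rw [e1, e1, e1, ← ENNReal.coe_min, ← ENNReal.coe_min, ← ENNReal.coe_sub, ← ENNReal.coe_min]
    simp only [ENNReal.coe_toReal]
    rcases le_total v n with h | h
    · have h2 : v ≤ ((m + n : ℕ) : NNReal) := h.trans (by push_cast; exact le_add_self)
      rw [min_eq_left h, min_eq_left h2]
      simp
    · rw [min_eq_right h]
      rcases le_total v ((m + n : ℕ) : NNReal) with h2 | h2
      · have h3 : v - n ≤ m := by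
          rw [tsub_le_iff_right]; exact_mod_cast h2
        rw [min_eq_left h2, min_eq_left h3, NNReal.coe_sub h]; ring
      · have h3 : (m : NNReal) ≤ v - n := by
          rw [le_tsub_iff_right h]; exact_mod_cast h2
        rw [min_eq_right h2, min_eq_right h3]; push_cast; ring

lemma resid_le (V : Ω → ℝ≥0∞) (n : ℕ) (ω : Ω) : resid V n ω ≤ V ω := tsub_le_self

lemma resid_anti (V : Ω → ℝ≥0∞) {n m : ℕ} (h : n ≤ m) (ω : Ω) : resid V m ω ≤ resid V n ω :=
  tsub_le_tsub_left (min_le_min_left _ (by exact_mod_cast h)) _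

end LpPart

end AbsProof

open AbsProof
/-- If `V : Ω → [0,∞]` is `T`-admissible, then the strong limit
`s-lim_{n→∞} T_{V−V∧n}` always exists and equals `(T_V)_{−V}`, the `C₀`-semigroup obtained
from `T_V` by applying `−V` as a perturbation (i.e. `s-lim_{n→∞} e^{t(A_V + V∧n)}`). -/
theorem statement16
    {Ω : Type*} [MeasurableSpace Ω] (μ : Measure Ω) (p : ℝ≥0∞) [Fact (1 ≤ p)] (hp : p ≠ ∞)
    (T : ℝ → Lp ℝ p μ →L[ℝ] Lp ℝ p μ)
    (hT : IsC0Semigroup T) (hTpos : IsPositiveSG T)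
    (V : Ω → ℝ≥0∞) (hVmeas : LocallyMeasurable μ V)
    -- the absorption semigroup `T_V`, a `C₀`-semigroup (`V` is `T`-admissible)
    (TV : ℝ → Lp ℝ p μ →L[ℝ] Lp ℝ p μ)
    (hTV : IsAbsorptionSG μ p T V TV) (hTVC0 : IsC0Semigroup TV)
    -- the absorption semigroups `T_{V − V∧n}`
    (R : ℕ → ℝ → Lp ℝ p μ →L[ℝ] Lp ℝ p μ)
    (hR : ∀ n : ℕ, IsAbsorptionSG μ p T (resid V n) (R n)) :
    ∃ L : ℝ → Lp ℝ p μ →L[ℝ] Lp ℝ p μ,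
      -- the strong limit `s-lim_{n→∞} T_{V−V∧n}` exists …
      (∀ t : ℝ, 0 ≤ t → ∀ f : Lp ℝ p μ,
        Tendsto (fun n : ℕ => R n t f) atTop (𝓝 (L t f))) ∧
      -- … and is a `C₀`-semigroup, namely `(T_V)_{−V}`,
      IsC0Semigroup L ∧
      -- the semigroup obtained from `T_V` by the perturbation `−V`
      (∃ U : ℕ → ℝ → Lp ℝ p μ →L[ℝ] Lp ℝ p μ,
        (∀ n : ℕ, IsPerturbedSG μ p TV (U n) (fun ω => -(trunc V n ω))) ∧
        ∀ t : ℝ, 0 ≤ t → ∀ f : Lp ℝ p μ,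
          Tendsto (fun n : ℕ => U n t f) atTop (𝓝 (L t f))) := by
  have pT : PosSG T := hTpos
  obtain ⟨S, hS, lS⟩ := hTV
  choose Q hQ lQ using hR
  have ex : ∀ V' : Ω → ℝ≥0∞, LocallyMeasurable μ V' → ∀ n : ℕ,
      ∃ B : Lp ℝ p μ →L[ℝ] Lp ℝ p μ, ∀ f, B f =ᵐ[μ] fun ω => trunc V' n ω * f ω :=
    fun V' hV' n => exists_mul hp (trunc_lm hV' n) (C := n) (fun ω => by
      rw [abs_of_nonneg (trunc_nonneg V' n ω)]; exact trunc_le V' n ω)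
  choose bV hbV using ex V hVmeas
  choose bR hbR using fun n => ex (resid V n) (resid_lm hVmeas n)
  have PS : ∀ n, Pert T (S n) (bV n) := fun n => pert_of_isPerturbed (hbV n) (hS n)
  have PQ : ∀ n m, Pert T (Q n m) (bR n m) := fun n m => pert_of_isPerturbed (hbR n m) (hQ n m)
  have hpos : ∀ (V' : Ω → ℝ≥0∞) (n : ℕ) (B : Lp ℝ p μ →L[ℝ] Lp ℝ p μ)
      (_ : ∀ f, B f =ᵐ[μ] fun ω => trunc V' n ω * f ω) (S' : ℝ → Lp ℝ p μ →L[ℝ] Lp ℝ p μ)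
      (_ : Pert T S' B), PosSG S' := by
    intro V' n B hB S' hS'
    refine pert_pos hT pT hS' n fun f hf => ?_
    have := mul_mono (W2 := fun _ => (n : ℝ)) (B2 := (n : ℝ) • ContinuousLinearMap.id ℝ _) hB
      (fun f => by
        filter_upwards [Lp.coeFn_smul (n : ℝ) f] with ω h
        exact h) (trunc_le V' n) f hf
    exact this
  have hle : ∀ (V' : Ω → ℝ≥0∞) (n : ℕ) (B : Lp ℝ p μ →L[ℝ] Lp ℝ p μ)
      (_ : ∀ f, B f =ᵐ[μ] fun ω => trunc V' n ω * f ω) (S' : ℝ → Lp ℝ p μ →L[ℝ] Lp ℝ p μ)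
      (_ : Pert T S' B), ∀ t, 0 ≤ t → ∀ f, 0 ≤ f → S' t f ≤ T t f := by
    intro V' n B hB S' hS' t ht f hf
    refine pert_le (pert_self hT) hS' pT (hpos V' n B hB S' hS') (fun f hf => ?_) ht hf
    refine mul_mono (W1 := fun _ => (0 : ℝ)) (fun f => ?_) hB (trunc_nonneg V' n) f hf
    filter_upwards [Lp.coeFn_zero ℝ p μ] with ω h
    simpa using h
  have posS : ∀ n, PosSG (S n) := fun n => hpos _ _ _ (hbV n) _ (PS n)
  have posQ : ∀ n m, PosSG (Q n m) := fun n m => hpos _ _ _ (hbR n m) _ (PQ n m)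
  have leS : ∀ n, ∀ t, 0 ≤ t → ∀ f, 0 ≤ f → S n t f ≤ T t f :=
    fun n => hle _ _ _ (hbV n) _ (PS n)
  have leQ : ∀ n m, ∀ t, 0 ≤ t → ∀ f, 0 ≤ f → Q n m t f ≤ T t f :=
    fun n m => hle _ _ _ (hbR n m) _ (PQ n m)
  have nS : ∀ n t, 0 ≤ t → ‖S n t‖ ≤ ‖T t‖ := fun n t ht =>
    norm_le_of_dom (posS n t ht) (leS n t ht)
  have nQ : ∀ n m t, 0 ≤ t → ‖Q n m t‖ ≤ ‖T t‖ := fun n m t ht =>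
    norm_le_of_dom (posQ n m t ht) (leQ n m t ht)
  have posR : ∀ n, PosSG (R n) := fun n t ht f hf =>
    ge_of_tendsto' (lQ n t ht f) (fun m => posQ n m t ht f hf)
  have leR : ∀ n, ∀ t, 0 ≤ t → ∀ f, 0 ≤ f → R n t f ≤ T t f := fun n t ht f hf =>
    le_of_tendsto' (lQ n t ht f) (fun m => leQ n m t ht f hf)
  have geR : ∀ n, ∀ t, 0 ≤ t → ∀ f, 0 ≤ f → TV t f ≤ R n t f := fun n t ht f hf =>
    le_of_tendsto_of_tendsto' (lS t ht f) (lQ n t ht f) (fun m =>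
      pert_le (PQ n m) (PS m) (posQ n m) (posS m)
        (mul_mono (hbR n m) (hbV m) (trunc_mono (resid_le V n) m)) ht hf)
  have monoR : ∀ n k, n ≤ k → ∀ t, 0 ≤ t → ∀ f, 0 ≤ f → R n t f ≤ R k t f :=
    fun n k hnk t ht f hf =>
      le_of_tendsto_of_tendsto' (lQ n t ht f) (lQ k t ht f) (fun m =>
        pert_le (PQ k m) (PQ n m) (posQ k m) (posQ n m)
          (mul_mono (hbR k m) (hbR n m) (trunc_mono (resid_anti V hnk) m)) ht hf)
  have nR : ∀ n t, 0 ≤ t → ‖R n t‖ ≤ ‖T t‖ := fun n t ht =>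
    norm_le_of_dom (posR n t ht) (leR n t ht)
  have sgR : ∀ n, IsSemigroup (R n) := fun n =>
    sg_limit (fun m => (PQ n m).1.1) (fun m t ht => nQ n m t ht) (lQ n)
  have c0R : ∀ n, IsC0Semigroup (R n) := fun n =>
    c0_of_squeeze (sgR n) (posR n) hT hTVC0 (geR n) (leR n)
  have exL : ∀ t : ℝ, ∃ Lt : Lp ℝ p μ →L[ℝ] Lp ℝ p μ, 0 ≤ t →
      ∀ f, Tendsto (fun n => R n t f) atTop (𝓝 (Lt f)) := by
    intro t
    by_cases ht : 0 ≤ t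
    · have h1 : ∀ f : Lp ℝ p μ, 0 ≤ f → ∃ v, Tendsto (fun n => R n t f) atTop (𝓝 v) :=
        fun f hf => lp_mono_conv hp (fun n => posR n t ht f hf)
          (fun n k hnk => monoR n k hnk t ht f hf) (fun n => leR n t ht f hf)
      have h2 : ∀ f : Lp ℝ p μ, ∃ v, Tendsto (fun n => R n t f) atTop (𝓝 v) := by
        intro f
        obtain ⟨v, hv⟩ := h1 f⁺ (posPart_nonneg f)
        obtain ⟨w, hw⟩ := h1 f⁻ (negPart_nonneg f)
        refine ⟨v - w, (hv.sub hw).congr fun n => ?_⟩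
        rw [← map_sub, posPart_sub_negPart]
      choose F hF using h2
      exact ⟨continuousLinearMapOfTendsto (fun n => R n t) (tendsto_pi_nhds.2 hF), fun _ => hF⟩
    · exact ⟨0, fun h => absurd h ht⟩
  choose L hL using exL
  refine ⟨L, hL, ?_, R, fun n => ⟨c0R n, fun f g => ?_⟩, hL⟩
  · refine c0_of_squeeze (sg_limit sgR nR hL) (fun t ht f hf => ?_) hT hTVC0
      (fun t ht f hf => ?_) (fun t ht f hf => ?_)
    · exact ge_of_tendsto' (hL t ht f) (fun n => posR n t ht f hf)
    · exact ge_of_tendsto' (hL t ht f) (fun n => geR n t ht f hf)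
    · exact le_of_tendsto' (hL t ht f) (fun n => leR n t ht f hf)
  · have hD : ∀ m, bV (m + n) - bR n m = bV n := by
      intro m
      ext1 u
      refine Lp.ext ?_
      filter_upwards [hbV (m + n) u, hbR n m u, hbV n u,
        Lp.coeFn_sub (bV (m + n) u) (bR n m u)] with ω a b c d
      rw [sub_apply, d, Pi.sub_apply, a, b, c, ← sub_mul, trunc_resid]
    rw [gen_limit (S := fun m => S (m + n)) (S' := Q n) hT hTVC0 (c0R n) (fun m => PS (m + n))
      (PQ n) (fun m => nS (m + n)) (nQ n) hD
      (fun t ht f => (lS t ht f).comp (tendsto_add_atTop_nat n)) (lQ n) f g]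
    constructor
    · intro h
      refine ⟨_, h, ?_⟩
      filter_upwards [Lp.coeFn_sub g (bV n f), hbV n f] with ω a b
      rw [a, Pi.sub_apply, b]; ring
    · rintro ⟨g0, h0, he⟩
      convert h0
      refine Lp.ext ?_
      filter_upwards [Lp.coeFn_sub g (bV n f), hbV n f, he] with ω a b c
      rw [a, Pi.sub_apply, b, c]; ring
end
end

section
/- Let (Ω, 𝒜, μ) be a measure space, p ∈ [1,∞), and T a positive C₀-semigroup on L_p(μ) with generator A. If V : Ω → [0,∞] (or V : Ω → [−∞,0]) is T-admissible, then the strong convergence e^{t(A − (V∧n)∨(−n))} → T_V(t) as n → ∞ is uniform for t in bounded subsets of [0,∞); that is, for every f ∈ L_p(μ) and every b > 0, sup_{0 ≤ t ≤ b} ‖e^{t(A − (V∧n)∨(−n))}f − T_V(t)f‖_p → 0 as n → ∞. -/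
open MeasureTheory Filter Topology ENNReal

noncomputable section

open Absorption

section Abstract

variable {E : Type*} [NormedAddCommGroup E] [NormedSpace ℝ E]

lemma aux_bound [CompleteSpace E] {T : ℝ → E →L[ℝ] E} (hT : IsC0Semigroup T) (b : ℝ) :
    ∃ M : ℝ, 0 < M ∧ ∀ t, 0 ≤ t → t ≤ b → ‖T t‖ ≤ M := by
  have h := banach_steinhaus (g := fun t : Set.Icc (0:ℝ) b => T t.1) (by
    intro x
    have hc : ContinuousOn (fun t => T t x) (Set.Icc 0 b) :=
      (hT.2 x).mono (fun t ht => ht.1)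
    obtain ⟨C, hC⟩ := isCompact_Icc.exists_bound_of_continuousOn hc
    exact ⟨C, fun i => hC i.1 i.2⟩)
  obtain ⟨C, hC⟩ := h
  refine ⟨max C 1, by positivity, fun t h0 hb => (hC ⟨t, h0, hb⟩).trans (le_max_left _ _)⟩

lemma aux_cont {T : ℝ → E →L[ℝ] E} (hT : IsC0Semigroup T) (f : E) :
    Continuous fun t : ℝ => T (max t 0) f := by
  have := (hT.2 f).comp_continuous (f := fun t : ℝ => max t 0) (by fun_prop)
    (fun t => Set.mem_Ici.2 (le_max_right _ _))
  exact this

lemma aux_joint [CompleteSpace E] {T : ℝ → E →L[ℝ] E} (hT : IsC0Semigroup T) :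
    Continuous fun q : ℝ × E => T (max q.1 0) q.2 := by
  rw [continuous_iff_continuousAt]
  rintro ⟨t₀, x₀⟩
  obtain ⟨M, hM, hb⟩ := aux_bound hT (max (t₀ + 1) 0)
  have h1 : Tendsto (fun q : ℝ × E => M * ‖q.2 - x₀‖ + ‖T (max q.1 0) x₀ - T (max t₀ 0) x₀‖)
      (𝓝 (t₀, x₀)) (𝓝 0) := by
    have hc : Continuous (fun q : ℝ × E =>
        M * ‖q.2 - x₀‖ + ‖T (max q.1 0) x₀ - T (max t₀ 0) x₀‖) := by
      have := (aux_cont hT x₀).comp (continuous_fst (X := ℝ) (Y := E))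
      exact (continuous_const.mul (continuous_snd.sub continuous_const).norm).add
        (this.sub continuous_const).norm
    have := hc.tendsto (t₀, x₀)
    simpa using this
  rw [ContinuousAt, tendsto_iff_norm_sub_tendsto_zero]
  refine squeeze_zero' (Eventually.of_forall fun _ => norm_nonneg _) ?_ h1
  have hn : ∀ᶠ q : ℝ × E in 𝓝 (t₀, x₀), q.1 < t₀ + 1 :=
    (continuous_fst.tendsto (t₀, x₀)).eventually (gt_mem_nhds (by simp))
  filter_upwards [hn] with q hq
  have e : T (max q.1 0) q.2 - T (max t₀ 0) x₀
      = T (max q.1 0) (q.2 - x₀) + (T (max q.1 0) x₀ - T (max t₀ 0) x₀) := by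
    rw [map_sub]; abel
  rw [e]
  refine (norm_add_le _ _).trans (add_le_add ?_ le_rfl)
  refine ((T (max q.1 0)).le_opNorm _).trans ?_
  gcongr
  exact hb _ (le_max_right _ _) (max_le_max hq.le le_rfl)

lemma aux_gen_invariant {S : ℝ → E →L[ℝ] E} (hS : IsC0Semigroup S) {f g : E}
    (h : InGenerator S f g) {s : ℝ} (hs : 0 ≤ s) : InGenerator S (S s f) (S s g) := by
  unfold InGenerator at *
  have := ((S s).continuous.tendsto g).comp h
  refine this.congr' ?_
  filter_upwards [self_mem_nhdsWithin] with t (ht : 0 < t)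
  have e : S t (S s f) = S s (S t f) := by
    have h1 := hS.1.2 t s ht.le hs
    have h2 := hS.1.2 s t hs ht.le
    rw [add_comm] at h1
    rw [h1] at h2
    exact congrArg (fun L : E →L[ℝ] E => L f) h2
  simp [e]

/-- averages lie in the domain -/
lemma aux_avg [CompleteSpace E] {T : ℝ → E →L[ℝ] E} (hT : IsC0Semigroup T) (x : E) {h : ℝ}
    (hh : 0 < h) :
    InGenerator T (∫ s in (0:ℝ)..h, T (max s 0) x) (T h x - x) := by
  have hc := aux_cont hT x
  have hint : ∀ a b : ℝ, IntervalIntegrable (fun s => T (max s 0) x) volume a b :=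
    fun a b => hc.intervalIntegrable a b
  set F : ℝ → E := fun u => ∫ s in (0:ℝ)..u, T (max s 0) x with hF
  have hd : ∀ u, HasDerivAt F (T (max u 0) x) u := fun u =>
    hc.integral_hasStrictDerivAt 0 u |>.hasDerivAt
  have hshift : ∀ r, 0 < r → T r (F h) = F (h + r) - F r := by
    intro r hr
    have h1 : T r (F h) = ∫ s in (0:ℝ)..h, T r (T (max s 0) x) :=
      ((T r).intervalIntegral_comp_comm (hint 0 h)).symm
    have h2 : ∫ s in (0:ℝ)..h, T r (T (max s 0) x) = ∫ s in (0:ℝ)..h, T (max (s + r) 0) x := by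
      refine intervalIntegral.integral_congr fun s hs => ?_
      rw [Set.uIcc_of_le hh.le] at hs
      have := hT.1.2 r s hr.le hs.1
      change T r (T (max s 0) x) = T (max (s + r) 0) x
      rw [max_eq_left hs.1, max_eq_left (by linarith [hs.1]), add_comm s r, this]
      rfl
    rw [h1, h2, intervalIntegral.integral_comp_add_right (fun s => T (max s 0) x) r, hF]
    simp only
    rw [intervalIntegral.integral_interval_sub_left (hint _ _) (hint _ _), zero_add]
  have k1 : Tendsto (fun r : ℝ => r⁻¹ • (F (h + r) - F h)) (𝓝[>] 0) (𝓝 (T h x)) := by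
    have := (hd h).tendsto_slope_zero_right
    rwa [max_eq_left hh.le] at this
  have k2 : Tendsto (fun r : ℝ => r⁻¹ • (F (0 + r) - F 0)) (𝓝[>] 0) (𝓝 x) := by
    have := (hd 0).tendsto_slope_zero_right
    rw [max_self, hT.1.1] at this
    exact this
  unfold InGenerator
  refine (k1.sub k2).congr' ?_
  filter_upwards [self_mem_nhdsWithin] with r (hr : 0 < r)
  have : F 0 = 0 := by simp [hF]
  change _ = r⁻¹ • (T r (F h) - F h)
  rw [hshift r hr, ← smul_sub, this, zero_add]
  congr 1
  abel

lemma aux_avg_tendsto [CompleteSpace E] {T : ℝ → E →L[ℝ] E} (hT : IsC0Semigroup T) (x : E) :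
    Tendsto (fun h : ℝ => h⁻¹ • ∫ s in (0:ℝ)..h, T (max s 0) x) (𝓝[>] 0) (𝓝 x) := by
  have hc := aux_cont hT x
  have := (hc.integral_hasStrictDerivAt 0 0).hasDerivAt.tendsto_slope_zero_right
  rw [max_self, hT.1.1] at this
  simpa using this

lemma aux_gen_smul {T : ℝ → E →L[ℝ] E} {f g : E} (c : ℝ) (h : InGenerator T f g) :
    InGenerator T (c • f) (c • g) := by
  unfold InGenerator at *
  refine (h.const_smul c).congr fun t => ?_
  rw [map_smul, ← smul_sub, smul_comm]

lemma aux_duhamel [CompleteSpace E] {T S : ℝ → E →L[ℝ] E} (hT : IsC0Semigroup T)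
    (hS : IsC0Semigroup S) (B : E →L[ℝ] E)
    (hB : ∀ f g, InGenerator T f g ↔ InGenerator S f (g + B f))
    {f g : E} (hf : InGenerator S f g) {t : ℝ} (ht : 0 ≤ t) :
    S t f = T t f + ∫ s in (0:ℝ)..t, T (max (t - s) 0) (B (S (max s 0) f)) := by
  have hj := aux_joint hT
  have hSc := aux_cont hS f
  have hvc : Continuous fun s : ℝ => T (max (t - s) 0) (S (max s 0) f) :=
    hj.comp (f := fun s : ℝ => (t - s, S (max s 0) f))
      ((continuous_const.sub continuous_id).prodMk hSc)
  have hv'c : Continuous fun s : ℝ => T (max (t - s) 0) (B (S (max s 0) f)) :=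
    hj.comp (f := fun s : ℝ => (t - s, B (S (max s 0) f)))
      ((continuous_const.sub continuous_id).prodMk (B.continuous.comp hSc))
  have key := intervalIntegral.integral_eq_sub_of_hasDeriv_right_of_le (a := 0) (b := t)
    (f := fun s : ℝ => T (max (t - s) 0) (S (max s 0) f))
    (f' := fun s : ℝ => T (max (t - s) 0) (B (S (max s 0) f))) ht hvc.continuousOn
    ?_ (hv'c.intervalIntegrable _ _)
  · rw [key]
    simp [ht, hT.1.1, hS.1.1]
  · intro s hs
    have hs0 := hs.1
    have hst := hs.2
    set w := S s f with hw
    have g1 : InGenerator S w (S s g) := aux_gen_invariant hS hf hs0.le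
    have g2 : InGenerator T w (S s g - B w) := by
      rw [hB]; simpa using g1
    have g3 : Tendsto (fun r : ℝ => r⁻¹ • (S r w - w) - r⁻¹ • (T r w - w)) (𝓝[>] 0)
        (𝓝 (B w)) := by
      have := Tendsto.sub g1 g2
      simpa using this
    have g4 : Tendsto (fun r : ℝ => (t - s - r, r⁻¹ • (S r w - w) - r⁻¹ • (T r w - w))) (𝓝[>] 0)
        (𝓝 (t - s, B w)) := by
      refine Tendsto.prodMk_nhds ?_ g3
      have : Tendsto (fun r : ℝ => t - s - r) (𝓝 0) (𝓝 (t - s - 0)) :=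
        (continuous_const.sub continuous_id).tendsto 0
      rw [sub_zero] at this
      exact this.mono_left nhdsWithin_le_nhds
    have g5 := (hj.tendsto (t - s, B w)).comp g4
    rw [hasDerivWithinAt_iff_tendsto_slope' (by simp)]
    have g6 : Tendsto (fun u : ℝ => u - s) (𝓝[>] s) (𝓝[>] 0) := by
      refine tendsto_nhdsWithin_iff.2 ⟨?_, ?_⟩
      · have : Tendsto (fun u : ℝ => u - s) (𝓝 s) (𝓝 (s - s)) :=
          (continuous_id.sub continuous_const).tendsto s
        rw [sub_self] at this
        exact this.mono_left nhdsWithin_le_nhds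
      · filter_upwards [self_mem_nhdsWithin] with u (hu : s < u)
        exact sub_pos.2 hu
    have g7 := g5.comp g6
    simp only [max_eq_left hs0.le]
    refine g7.congr' ?_
    filter_upwards [Ioo_mem_nhdsGT hst] with u hu
    have hu1 := hu.1
    have hu2 := hu.2
    have e1 : S (max u 0) f = S (u - s) w := by
      rw [max_eq_left (by linarith), hw]
      have := hS.1.2 (u - s) s (by linarith) hs0.le
      rw [sub_add_cancel] at this
      rw [this]; rfl
    have e2 : T (max (t - s) 0) (S (max s 0) f) = T (t - u) (T (u - s) w) := by
      rw [max_eq_left (by linarith), max_eq_left hs0.le, ← hw]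
      have := hT.1.2 (t - u) (u - s) (by linarith) (by linarith)
      rw [sub_add_sub_cancel] at this
      rw [this]; rfl
    rw [slope_def_module]
    rw [e1, e2]
    simp only [Function.comp_def]
    rw [show t - s - (u - s) = t - u by ring, max_eq_left (by linarith : 0 ≤ t - u),
      ← smul_sub, map_smul, ← map_sub]
    congr 2
    abel

section order
variable [Lattice E] [HasSolidNorm E] [IsOrderedAddMonoid E] [IsOrderedModule ℝ E]
  [CompleteSpace E]

lemma aux_int_nonneg {u : ℝ → E} {t : ℝ} (ht : 0 ≤ t)
    (h : ∀ s, 0 ≤ s → s ≤ t → 0 ≤ u s) : 0 ≤ ∫ s in (0:ℝ)..t, u s := by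
  rw [intervalIntegral.integral_of_le ht]
  refine integral_nonneg_of_ae ?_
  refine (ae_restrict_iff' measurableSet_Ioc).2 (ae_of_all _ fun s hs => ?_)
  exact h s hs.1.le hs.2

/-- small-time positivity on positive domain elements -/
lemma aux_small {T S : ℝ → E →L[ℝ] E} (hT : IsC0Semigroup T)
    (hS : IsC0Semigroup S) (B : E →L[ℝ] E)
    (hB : ∀ f g, InGenerator T f g ↔ InGenerator S f (g + B f))
    (hTp : ∀ t, 0 ≤ t → ∀ f, 0 ≤ f → 0 ≤ T t f) (hBp : ∀ f, 0 ≤ f → 0 ≤ B f) :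
    ∃ b : ℝ, 0 < b ∧ ∀ t, 0 ≤ t → t ≤ b → ∀ f g, InGenerator S f g → 0 ≤ f → 0 ≤ S t f := by
  obtain ⟨M, hM, hMb⟩ := aux_bound hT 1
  set K := M * (‖B‖ + 1) with hK
  have hK0 : 0 < K := by positivity
  refine ⟨min 1 (1 / (2 * K)), by positivity, ?_⟩
  set b := min 1 (1 / (2 * K)) with hb
  have hb0 : 0 < b := by positivity
  have hb1 : b ≤ 1 := min_le_left _ _
  have hbK : K * b ≤ 1 / 2 := by
    calc K * b ≤ K * (1 / (2 * K)) := by gcongr; exact min_le_right _ _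
      _ = 1 / 2 := by field_simp
  intro t ht htb f g hf hf0
  have hc : Continuous fun s : ℝ => S (max s 0) f := aux_cont hS f
  have hnc : Continuous fun s : ℝ => (S (max s 0) f)⁻ := by
    simp only [negPart_def]
    exact (continuous_neg.comp hc).sup continuous_const
  obtain ⟨τ, hτ, hmax⟩ := isCompact_Icc.exists_isMaxOn (Set.nonempty_Icc.2 hb0.le)
    hnc.norm.continuousOn
  have hτ0 := hτ.1
  have hτb := hτ.2
  set m := ‖(S (max τ 0) f)⁻‖ with hm
  have hj := aux_joint hT
  have hD := aux_duhamel hT hS B hB hf hτ.1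
  have hv'c : Continuous fun s : ℝ => T (max (τ - s) 0) (B (S (max s 0) f)) :=
    hj.comp (f := fun s : ℝ => (τ - s, B (S (max s 0) f)))
      ((continuous_const.sub continuous_id).prodMk (B.continuous.comp hc))
  have hv''c : Continuous fun s : ℝ => T (max (τ - s) 0) (B (S (max s 0) f)⁻) :=
    hj.comp (f := fun s : ℝ => (τ - s, B (S (max s 0) f)⁻))
      ((continuous_const.sub continuous_id).prodMk (B.continuous.comp hnc))
  set J := ∫ s in (0:ℝ)..τ, T (max (τ - s) 0) (B (S (max s 0) f)⁻) with hJ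
  have hJ0 : 0 ≤ J := aux_int_nonneg hτ0 fun s _ _ =>
    hTp _ (le_max_right _ _) _ (hBp _ (negPart_nonneg _))
  have hsum : 0 ≤ (∫ s in (0:ℝ)..τ, T (max (τ - s) 0) (B (S (max s 0) f))) + J := by
    rw [hJ, ← intervalIntegral.integral_add (hv'c.intervalIntegrable _ _)
      (hv''c.intervalIntegrable _ _)]
    refine aux_int_nonneg hτ0 fun s _ _ => ?_
    rw [← map_add, ← map_add]
    refine hTp _ (le_max_right _ _) _ (hBp _ ?_)
    have h1 := posPart_sub_negPart (S (max s 0) f)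
    have h2 : S (max s 0) f + (S (max s 0) f)⁻ = (S (max s 0) f)⁺ :=
      (sub_eq_iff_eq_add.1 h1).symm
    rw [h2]
    exact posPart_nonneg _
  have hge : -J ≤ S (max τ 0) f := by
    rw [max_eq_left hτ0, hD]
    have h1 := hTp τ hτ0 f hf0
    rw [neg_le_iff_add_nonneg, add_assoc]
    exact add_nonneg h1 hsum
  have hle : (S (max τ 0) f)⁻ ≤ J := by
    rw [negPart_def]
    exact sup_le (neg_le.1 hge) hJ0
  have hnorm : m ≤ ‖J‖ := by
    refine norm_le_norm_of_abs_le_abs ?_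
    rw [abs_of_nonneg (negPart_nonneg _), abs_of_nonneg hJ0]
    exact hle
  have hJn : ‖J‖ ≤ (K * m) * |τ - 0| := by
    refine intervalIntegral.norm_integral_le_of_norm_le_const fun s hs => ?_
    rw [Set.uIoc_of_le hτ0] at hs
    have hs1 := hs.1
    have hs2 := hs.2
    have hsm : ‖(S (max s 0) f)⁻‖ ≤ m := hmax ⟨hs1.le, by linarith⟩
    calc ‖T (max (τ - s) 0) (B (S (max s 0) f)⁻)‖
        ≤ ‖T (max (τ - s) 0)‖ * ‖B (S (max s 0) f)⁻‖ := (T _).le_opNorm _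
      _ ≤ M * ((‖B‖ + 1) * m) := by
        gcongr
        · exact hMb _ (le_max_right _ _) (max_le (by linarith) zero_le_one)
        · refine (B.le_opNorm _).trans ?_
          gcongr
          linarith
      _ = K * m := by rw [hK]; ring
  have hm0 : 0 ≤ m := norm_nonneg _
  rw [sub_zero, abs_of_nonneg hτ0] at hJn
  have hmz : m ≤ 0 := by
    have : K * m * τ ≤ K * m * b := by gcongr
    nlinarith
  have htm : ‖(S (max t 0) f)⁻‖ ≤ m := hmax ⟨ht, htb⟩
  have : (S (max t 0) f)⁻ = 0 := norm_le_zero_iff.1 (htm.trans hmz)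
  rw [max_eq_left ht] at this
  exact negPart_eq_zero.1 this

/-- Comparison lemma -/
lemma aux_compare {T S : ℝ → E →L[ℝ] E} (hT : IsC0Semigroup T)
    (hS : IsC0Semigroup S) (B : E →L[ℝ] E)
    (hB : ∀ f g, InGenerator T f g ↔ InGenerator S f (g + B f))
    (hTp : ∀ t, 0 ≤ t → ∀ f, 0 ≤ f → 0 ≤ T t f) (hBp : ∀ f, 0 ≤ f → 0 ≤ B f) :
    ∀ t, 0 ≤ t → ∀ f, 0 ≤ f → 0 ≤ S t f ∧ T t f ≤ S t f := by
  have approx : ∀ f : E, 0 ≤ f → ∀ P : E → Prop, IsClosed {x | P x} →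
      (∀ x g, 0 ≤ x → InGenerator S x g → P x) → P f := by
    intro f hf P hP h
    refine hP.mem_of_tendsto (aux_avg_tendsto hT f) ?_
    filter_upwards [self_mem_nhdsWithin] with r (hr : 0 < r)
    have hg := aux_gen_smul r⁻¹ (aux_avg hT f hr)
    refine h _ _ ?_ ((hB _ _).1 hg)
    exact smul_nonneg (inv_nonneg.2 hr.le)
      (aux_int_nonneg hr.le fun s _ _ => hTp _ (le_max_right _ _) _ hf)
  obtain ⟨b, hb, hsmall⟩ := aux_small hT hS B hB hTp hBp
  have hsmall' : ∀ t, 0 ≤ t → t ≤ b → ∀ f, 0 ≤ f → 0 ≤ S t f := by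
    intro t ht htb f hf
    refine approx f hf (fun x => 0 ≤ S t x) ?_ (fun x g hx hg => hsmall t ht htb x g hg hx)
    exact isClosed_le continuous_const (S t).continuous
  have hall : ∀ n : ℕ, ∀ t, 0 ≤ t → t ≤ n * b → ∀ f, 0 ≤ f → 0 ≤ S t f := by
    intro n
    induction n with
    | zero =>
      intro t ht htb f hf
      refine hsmall' t ht ?_ f hf
      simp at htb
      linarith
    | succ n ih =>
      intro t ht htb f hf
      push_cast at htb
      rcases le_total t b with h | h
      · exact hsmall' t ht h f hf
      · have := hS.1.2 (t - b) b (by linarith) hb.le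
        rw [sub_add_cancel] at this
        rw [this]
        exact ih (t - b) (by linarith) (by linarith) _ (hsmall' b hb.le le_rfl f hf)
  have hpos : ∀ t, 0 ≤ t → ∀ f, 0 ≤ f → 0 ≤ S t f := by
    intro t ht f hf
    obtain ⟨n, hn⟩ := exists_nat_ge (t / b)
    exact hall n t ht ((div_le_iff₀ hb).1 hn) f hf
  intro t ht f hf
  refine ⟨hpos t ht f hf, ?_⟩
  refine approx f hf (fun x => T t x ≤ S t x) ?_ (fun x g hx hg => ?_)
  · exact isClosed_le (T t).continuous (S t).continuous
  · rw [aux_duhamel hT hS B hB hg ht]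
    refine le_add_of_nonneg_right (aux_int_nonneg ht fun s _ _ => ?_)
    exact hTp _ (le_max_right _ _) _ (hBp _ (hpos _ (le_max_right _ _) _ hx))

end order

/-- rescaled semigroup -/
def resc (c : ℝ) (T : ℝ → E →L[ℝ] E) : ℝ → E →L[ℝ] E := fun t => Real.exp (c * t) • T t

lemma resc_C0 (c : ℝ) {T : ℝ → E →L[ℝ] E} (hT : IsC0Semigroup T) : IsC0Semigroup (resc c T) := by
  refine ⟨⟨by simp [resc, hT.1.1], fun s t hs ht => ?_⟩, fun f => ?_⟩
  · ext x
    simp only [resc, hT.1.2 s t hs ht, mul_add, Real.exp_add]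
    simp [smul_smul, mul_comm]
  · have := hT.2 f
    simp only [resc, smul_apply]
    exact ContinuousOn.smul (by fun_prop) this

lemma resc_gen (c : ℝ) {T : ℝ → E →L[ℝ] E} {f g : E} (h : InGenerator T f g) :
    InGenerator (resc c T) f (g + c • f) := by
  unfold InGenerator at *
  have hd : HasDerivAt (fun t : ℝ => Real.exp (c * t)) c 0 := by
    have h1 : HasDerivAt (fun t : ℝ => c * t) c 0 := by
      simpa using (hasDerivAt_id (0:ℝ)).const_mul c
    simpa using h1.exp
  have k1 : Tendsto (fun t : ℝ => t⁻¹ • (Real.exp (c * t) - 1)) (𝓝[>] 0) (𝓝 c) := by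
    simpa using hd.tendsto_slope_zero_right
  have k2 : Tendsto (fun t : ℝ => Real.exp (c * t)) (𝓝[>] 0) (𝓝 1) := by
    have := hd.continuousAt.tendsto
    simp only [mul_zero, Real.exp_zero] at this
    exact this.mono_left nhdsWithin_le_nhds
  have k3 := (k2.smul h).add (k1.smul_const f)
  rw [one_smul] at k3
  refine k3.congr fun t => ?_
  simp only [resc, smul_apply]
  module

lemma resc_resc (c : ℝ) (T : ℝ → E →L[ℝ] E) : resc (-c) (resc c T) = T := by
  funext t
  simp [resc, smul_smul, ← Real.exp_add]

end Abstract

section Concrete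

variable {Ω : Type*} [MeasurableSpace Ω] {μ : Measure Ω} {p : ℝ≥0∞} [Fact (1 ≤ p)]

lemma aux_ordered : IsOrderedModule ℝ (Lp ℝ p μ) := by
  refine IsOrderedModule.of_smul_nonneg fun a ha f hf => ?_
  rw [← Lp.coeFn_nonneg] at hf ⊢
  filter_upwards [hf, Lp.coeFn_smul a f] with ω h1 h2
  rw [h2]
  exact mul_nonneg ha h1

lemma aux_meas (hp : p ≠ ∞) {w : Ω → ℝ} (hw : LocallyMeasurable μ w) (f : Lp ℝ p μ) :
    AEStronglyMeasurable (fun ω => w ω * f ω) μ := by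
  have hp0 : p ≠ 0 := (lt_of_lt_of_le zero_lt_one (Fact.out : 1 ≤ p)).ne'
  obtain ⟨t, ht, hft, hsig⟩ := (Lp.finStronglyMeasurable f hp0 hp).exists_set_sigmaFinite
  have h1 : AEMeasurable w (μ.restrict t) := by
    have hU := iUnion_spanningSets (μ.restrict t)
    have : AEMeasurable w ((μ.restrict t).restrict (⋃ i, spanningSets (μ.restrict t) i)) := by
      rw [aemeasurable_iUnion_iff]
      intro i
      have hm := measurableSet_spanningSets (μ.restrict t) i
      rw [Measure.restrict_restrict hm]
      have hfin := measure_spanningSets_lt_top (μ.restrict t) i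
      rw [Measure.restrict_apply hm] at hfin
      obtain ⟨g, hg, hgw⟩ := hw _ (hm.inter ht) hfin
      exact ⟨g, hg, hgw⟩
    rwa [hU, Measure.restrict_univ] at this
  have h2 : AEStronglyMeasurable (fun ω => w ω * f ω) (μ.restrict t) :=
    h1.aestronglyMeasurable.mul (Lp.aestronglyMeasurable f).restrict
  have h3 : AEStronglyMeasurable (t.indicator fun ω => w ω * f ω) μ :=
    (aestronglyMeasurable_indicator_iff ht).2 h2
  convert h3 using 1
  funext ω
  by_cases hω : ω ∈ t
  · simp [hω]
  · simp [hω, hft ω hω]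

lemma aux_mul (hp : p ≠ ∞) {w : Ω → ℝ} (hw : LocallyMeasurable μ w) (c : ℝ)
    (h : ∀ ω, 0 ≤ w ω ∧ w ω ≤ c) :
    ∃ B : Lp ℝ p μ →L[ℝ] Lp ℝ p μ, (∀ f : Lp ℝ p μ, ⇑(B f) =ᵐ[μ] fun ω => w ω * f ω) ∧
      ∀ f, 0 ≤ f → 0 ≤ B f := by
  have hmem : ∀ f : Lp ℝ p μ, MemLp (fun ω => w ω * f ω) p μ := by
    intro f
    refine (Lp.memLp f).of_le_mul (c := c) (aux_meas hp hw f) (ae_of_all _ fun ω => ?_)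
    rw [norm_mul, Real.norm_of_nonneg (h ω).1]
    gcongr
    exact (h ω).2
  have hspec : ∀ f : Lp ℝ p μ, ⇑((hmem f).toLp _) =ᵐ[μ] fun ω => w ω * f ω :=
    fun f => (hmem f).coeFn_toLp
  let L : Lp ℝ p μ →ₗ[ℝ] Lp ℝ p μ :=
    { toFun := fun f => (hmem f).toLp _
      map_add' := fun f g => by
        apply Lp.ext
        filter_upwards [hspec (f + g), hspec f, hspec g, Lp.coeFn_add f g,
          Lp.coeFn_add ((hmem f).toLp _) ((hmem g).toLp _)] with ω h1 h2 h3 h4 h5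
        rw [h1, h5, h4]
        simp only [Pi.add_apply]
        rw [h2, h3]
        ring
      map_smul' := fun a f => by
        apply Lp.ext
        filter_upwards [hspec (a • f), hspec f, Lp.coeFn_smul a f,
          Lp.coeFn_smul a ((hmem f).toLp _)] with ω h1 h2 h4 h5
        simp only [RingHom.id_apply]
        rw [h1, h5, h4]
        simp only [Pi.smul_apply, smul_eq_mul]
        rw [h2]
        ring }
  refine ⟨L.mkContinuous c fun f => ?_, fun f => hspec f, fun f hf => ?_⟩
  · refine Lp.norm_le_mul_norm_of_ae_le_mul ?_
    filter_upwards [hspec f] with ω hω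
    change ‖((hmem f).toLp _ : Lp ℝ p μ) ω‖ ≤ _
    rw [hω, norm_mul, Real.norm_of_nonneg (h ω).1]
    gcongr
    exact (h ω).2
  · change 0 ≤ ((hmem f).toLp _ : Lp ℝ p μ)
    rw [← Lp.coeFn_nonneg] at hf ⊢
    filter_upwards [hf, hspec f] with ω h1 h2
    rw [h2]
    exact mul_nonneg (h ω).1 h1

lemma aux_pair (hp : p ≠ ∞) {T S₁ S₂ : ℝ → Lp ℝ p μ →L[ℝ] Lp ℝ p μ} {W₁ W₂ : Ω → ℝ}
    (h₁ : IsPerturbedSG μ p T S₁ W₁) (h₂ : IsPerturbedSG μ p T S₂ W₂)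
    (hm₁ : LocallyMeasurable μ W₁) (hm₂ : LocallyMeasurable μ W₂) (c : ℝ)
    (h : ∀ ω, W₂ ω ≤ W₁ ω ∧ W₁ ω - W₂ ω ≤ c) (hpos : IsPositiveSG S₁) :
    ∀ t, 0 ≤ t → ∀ f, 0 ≤ f → 0 ≤ S₂ t f ∧ S₁ t f ≤ S₂ t f := by
  have hm : LocallyMeasurable μ (fun ω => W₁ ω - W₂ ω) := by
    intro B hB hBf
    obtain ⟨g₁, hg₁, e₁⟩ := hm₁ B hB hBf
    obtain ⟨g₂, hg₂, e₂⟩ := hm₂ B hB hBf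
    refine ⟨fun ω => g₁ ω - g₂ ω, hg₁.sub hg₂, ?_⟩
    filter_upwards [e₁, e₂] with ω a b
    rw [a, b]
  obtain ⟨B, hB, hBp⟩ := aux_mul (μ := μ) hp hm c
    (fun ω => ⟨sub_nonneg.2 (h ω).1, (h ω).2⟩)
  haveI := aux_ordered (μ := μ) (p := p)
  refine aux_compare h₁.1 h₂.1 B (fun f g => ?_) hpos hBp
  rw [h₁.2, h₂.2]
  refine exists_congr fun g₀ => and_congr_right fun _ => ?_
  constructor
  · intro hh
    filter_upwards [hh, hB f, Lp.coeFn_add g (B f)] with ω a b d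
    rw [d, Pi.add_apply, a, b]; ring
  · intro hh
    filter_upwards [hh, hB f, Lp.coeFn_add g (B f)] with ω a b d
    rw [d, Pi.add_apply, b] at a
    linarith

lemma aux_shift (T : ℝ → Lp ℝ p μ →L[ℝ] Lp ℝ p μ) (hT : IsC0Semigroup T) (c : ℝ) :
    IsPerturbedSG μ p T (resc (-c) T) (fun _ => c) := by
  refine ⟨resc_C0 _ hT, fun f g => ⟨fun h => ?_, ?_⟩⟩
  · refine ⟨g + c • f, ?_, ?_⟩
    · have := resc_gen c h
      have e := resc_resc (-c) T
      rw [neg_neg] at e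
      rwa [e] at this
    · filter_upwards [Lp.coeFn_add g (c • f), Lp.coeFn_smul c f] with ω a b
      rw [a, Pi.add_apply, b]; simp
  · rintro ⟨g₀, h, e⟩
    have : g = g₀ + (-c) • f := by
      apply Lp.ext
      filter_upwards [e, Lp.coeFn_add g₀ ((-c) • f), Lp.coeFn_smul (-c) f] with ω a b d
      rw [a, b, Pi.add_apply, d]; simp; ring
    rw [this]
    exact resc_gen _ h

lemma aux_truncE_meas {V : Ω → EReal} (hV : LocallyMeasurable μ V) (n : ℕ) :
    LocallyMeasurable μ (truncE V n) := by
  intro B hB hBf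
  obtain ⟨g, hg, e⟩ := hV B hB hBf
  refine ⟨truncE g n, ?_, ?_⟩
  · unfold truncE
    exact ((hg.min measurable_const).max measurable_const).ereal_toReal
  · filter_upwards [e] with ω h
    simp [truncE, h]

lemma aux_truncE_coe (V : Ω → EReal) (n : ℕ) (ω : Ω) :
    ((truncE V n ω : ℝ) : EReal) = max (min (V ω) (n : EReal)) (-(n : EReal)) := by
  unfold truncE
  refine EReal.coe_toReal ?_ ?_
  · refine ne_of_lt (max_lt (lt_of_le_of_lt (min_le_right _ _) ?_) ?_)
    · exact EReal.coe_lt_top (n : ℝ)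
    · exact EReal.coe_lt_top (-(n : ℝ))
  · refine ne_of_gt (lt_of_lt_of_le ?_ (le_max_right _ _))
    exact EReal.bot_lt_coe (-(n : ℝ))

lemma aux_natneg (n : ℕ) : -(n : EReal) ≤ (n : EReal) := by
  have : -(n : ℝ) ≤ (n : ℝ) := by have : (0:ℝ) ≤ n := n.cast_nonneg; linarith
  exact EReal.coe_le_coe_iff.2 this

lemma aux_truncE_bound (V : Ω → EReal) (n : ℕ) (ω : Ω) :
    -(n : ℝ) ≤ truncE V n ω ∧ truncE V n ω ≤ n := by
  have h := aux_truncE_coe V n ω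
  constructor
  · have : ((-(n : ℝ) : ℝ) : EReal) ≤ (truncE V n ω : ℝ) := by
      rw [h]; exact le_max_right _ _
    exact_mod_cast this
  · have : ((truncE V n ω : ℝ) : EReal) ≤ ((n : ℝ) : EReal) := by
      rw [h]; exact max_le (min_le_right _ _) (aux_natneg n)
    exact_mod_cast this

lemma aux_truncE_mono {V : Ω → EReal} (hV : ∀ ω, 0 ≤ V ω) {m n : ℕ} (hmn : m ≤ n) (ω : Ω) :
    truncE V m ω ≤ truncE V n ω := by
  rw [← EReal.coe_le_coe_iff, aux_truncE_coe, aux_truncE_coe]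
  have hc : (m : EReal) ≤ (n : EReal) := by exact_mod_cast hmn
  have h0 : (0 : EReal) ≤ (m : EReal) := by exact_mod_cast m.zero_le
  have h1 : -(m : EReal) ≤ 0 := by simpa using EReal.neg_le_neg_iff.2 h0
  refine max_le (le_max_of_le_left (min_le_min le_rfl hc)) (le_max_of_le_left ?_)
  exact h1.trans (le_min (hV ω) (h0.trans hc))

lemma aux_truncE_anti {V : Ω → EReal} (hV : ∀ ω, V ω ≤ 0) {m n : ℕ} (hmn : m ≤ n) (ω : Ω) :
    truncE V n ω ≤ truncE V m ω := by
  rw [← EReal.coe_le_coe_iff, aux_truncE_coe, aux_truncE_coe]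
  have hc : (m : EReal) ≤ (n : EReal) := by exact_mod_cast hmn
  have h0 : (0 : EReal) ≤ (m : EReal) := by exact_mod_cast m.zero_le
  rw [min_eq_left ((hV ω).trans h0), min_eq_left ((hV ω).trans (h0.trans hc))]
  exact max_le_max le_rfl (EReal.neg_le_neg_iff.2 hc)

end Concrete

/-- If `V : Ω → [0,∞]` (or `V : Ω → [−∞,0]`) is `T`-admissible, then the
strong convergence `e^{t(A − (V∧n)∨(−n))} → T_V(t)` as `n → ∞` is uniform for `t` in bounded
subsets of `[0,∞)`: for every `f ∈ L_p(μ)` and `b > 0`,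
`sup_{0 ≤ t ≤ b} ‖e^{t(A − (V∧n)∨(−n))}f − T_V(t)f‖ → 0`. -/
theorem statement17
    {Ω : Type*} [MeasurableSpace Ω] (μ : Measure Ω) (p : ℝ≥0∞) [Fact (1 ≤ p)] (hp : p ≠ ∞)
    (T : ℝ → Lp ℝ p μ →L[ℝ] Lp ℝ p μ)
    (hT : IsC0Semigroup T) (hTpos : IsPositiveSG T)
    (V : Ω → EReal) (hVsign : (∀ ω, 0 ≤ V ω) ∨ (∀ ω, V ω ≤ 0))
    (hVmeas : LocallyMeasurable μ V)
    -- the perturbed semigroups `e^{t(A − (V∧n)∨(−n))}`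
    (S : ℕ → ℝ → Lp ℝ p μ →L[ℝ] Lp ℝ p μ)
    (hS : ∀ n : ℕ, IsPerturbedSG μ p T (S n) (truncE V n))
    -- `V` is `T`-admissible: the strong limits exist and `T_V` is a `C₀`-semigroup
    (TV : ℝ → Lp ℝ p μ →L[ℝ] Lp ℝ p μ)
    (hTV : ∀ t : ℝ, 0 ≤ t → ∀ f : Lp ℝ p μ,
      Tendsto (fun n : ℕ => S n t f) atTop (𝓝 (TV t f)))
    (hTVC0 : IsC0Semigroup TV) :
    -- the convergence is uniform for `t` in bounded subsets of `[0,∞)`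
    ∀ f : Lp ℝ p μ, ∀ b : ℝ, 0 < b →
      TendstoUniformlyOn (fun (n : ℕ) (t : ℝ) => S n t f) (fun t : ℝ => TV t f) atTop
        (Set.Icc (0 : ℝ) b) := by
  have hWm := fun n => aux_truncE_meas (μ := μ) hVmeas n
  have hpos : ∀ n, IsPositiveSG (S n) := by
    intro n t ht f hf
    have hr : IsPositiveSG (resc (-(n : ℝ)) T) := by
      intro t ht f hf
      haveI := aux_ordered (μ := μ) (p := p)
      exact smul_nonneg (Real.exp_pos _).le (hTpos t ht f hf)
    refine (aux_pair hp (aux_shift T hT n) (hS n) ?_ (hWm n) (2 * n) ?_ hr t ht f hf).1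
    · exact fun B _ _ => ⟨fun _ => (n : ℝ), measurable_const, ae_of_all _ fun _ => rfl⟩
    · intro ω
      have := aux_truncE_bound V n ω
      constructor <;> linarith [this.1, this.2]
  have hcmp : ∀ m n, (∀ ω, truncE V n ω ≤ truncE V m ω) →
      ∀ t, 0 ≤ t → ∀ f, 0 ≤ f → S m t f ≤ S n t f := by
    intro m n h t ht f hf
    refine (aux_pair hp (hS m) (hS n) (hWm m) (hWm n) (m + n) (fun ω => ⟨h ω, ?_⟩)
      (hpos m) t ht f hf).2
    have h1 := aux_truncE_bound V n ω
    have h2 := aux_truncE_bound V m ω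
    linarith [h1.1, h2.2]
  have hposf : ∀ f : Lp ℝ p μ, 0 ≤ f → ∀ b : ℝ,
      TendstoUniformlyOn (fun (n : ℕ) (t : ℝ) => S n t f) (fun t : ℝ => TV t f) atTop
        (Set.Icc (0 : ℝ) b) := by
    intro f hf b
    have c1 : ∀ n, ContinuousOn (fun t => S n t f) (Set.Icc 0 b) := fun n =>
      ((hS n).1.2 f).mono fun t ht => ht.1
    have c2 : ContinuousOn (fun t => TV t f) (Set.Icc 0 b) :=
      (hTVC0.2 f).mono fun t ht => ht.1
    rcases hVsign with hV | hV
    · exact Antitone.tendstoUniformlyOn_of_forall_tendsto isCompact_Icc c1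
        (fun t ht m n hmn => hcmp n m (aux_truncE_mono hV hmn) t ht.1 f hf) c2
        (fun t ht => hTV t ht.1 f)
    · exact Monotone.tendstoUniformlyOn_of_forall_tendsto isCompact_Icc c1
        (fun t ht m n hmn => hcmp m n (aux_truncE_anti hV hmn) t ht.1 f hf) c2
        (fun t ht => hTV t ht.1 f)
  intro f b _
  have h1 := (hposf f⁺ (posPart_nonneg f) b).sub (hposf f⁻ (negPart_nonneg f) b)
  have e : ∀ L : Lp ℝ p μ →L[ℝ] Lp ℝ p μ, L f⁺ - L f⁻ = L f := fun L => by
    rw [← map_sub, posPart_sub_negPart]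
  have e1 : ((fun (n : ℕ) (t : ℝ) => S n t f⁺) - fun (n : ℕ) (t : ℝ) => S n t f⁻)
      = fun (n : ℕ) (t : ℝ) => S n t f := by
    funext n t; exact e _
  have e2 : ((fun t : ℝ => TV t f⁺) - fun t : ℝ => TV t f⁻) = fun t : ℝ => TV t f := by
    funext t; exact e _
  rw [e1, e2] at h1
  exact h1
end
end
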